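/- arXiv:2204.10354 — 2 statements merged into one kernel-verified Lean document; each statement's English description precedes it below -/
import Mathlib

section
/- Let Γ be a virtually polycyclic group. If the second group cohomology H²(Γ;ℤ) of Γ with trivial coefficients ℤ contains an element of infinite additive order (i.e., a non-torsion element x with n·x ≠ 0 for all integers n ≥ 1), then Γ is not matricially stable. -/
noncomputable section
open scoped Classical

/-- The algebra of "n×n complex matrices" realized as bounded operators on `ℓ²(Fin n)`,
equipped with the ℓ²-operator norm. -/
abbrev Mat (n : ℕ) := EuclideanSpace ℂ (Fin n) →L[ℂ] EuclideanSpace ℂ (Fin n)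

/-- The boundary of a 2-chain. -/
def chainBoundary {Γ : Type*} [Group Γ] (c : (Γ × Γ) →₀ ℤ) : Γ → ℤ :=
  fun g => c.sum fun p x =>
    x * ((if p.2 = g then 1 else 0) - (if p.1 * p.2 = g then 1 else 0) +
      (if p.1 = g then 1 else 0))

/-- A 2-chain is a 2-cycle if its boundary vanishes. -/
def IsTwoCycle {Γ : Type*} [Group Γ] (c : (Γ × Γ) →₀ ℤ) : Prop :=
  chainBoundary c = 0

/-- The boundary support of a 2-chain: all `aᵢ`, `bᵢ`, `aᵢbᵢ` for `(aᵢ,bᵢ)` in the support. -/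
def boundarySupport {Γ : Type*} [Group Γ] (c : (Γ × Γ) →₀ ℤ) : Set Γ :=
  ⋃ p ∈ c.support, {p.1, p.2, p.1 * p.2}

/-- The pairing of a ℤ-valued 2-cochain with a 2-chain. -/
def pairInt {Γ : Type*} [Group Γ] (σ : Γ → Γ → ℤ) (c : (Γ × Γ) →₀ ℤ) : ℤ :=
  c.sum fun p x => x * σ p.1 p.2

/-- ℤ-valued 2-cocycle condition. -/
def IsTwoCocycle {Γ : Type*} [Group Γ] (σ : Γ → Γ → ℤ) : Prop :=
  ∀ g₁ g₂ g₃ : Γ, σ g₂ g₃ - σ (g₁ * g₂) g₃ + σ g₁ (g₂ * g₃) - σ g₁ g₂ = 0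

/-- The logarithm defined as a power series centered at 1. -/
def matLog {n : ℕ} (m : Mat n) : Mat n :=
  ∑' k : ℕ, ((-1 : ℂ) ^ k / (k + 1)) • (m - 1) ^ (k + 1)

/-- Trace of an operator. -/
def clmTrace {n : ℕ} (f : Mat n) : ℂ :=
  LinearMap.trace ℂ (EuclideanSpace ℂ (Fin n)) (f : EuclideanSpace ℂ (Fin n) →ₗ[ℂ] EuclideanSpace ℂ (Fin n))

/-- `ρ` is ε-almost multiplicative on the support of `c`. -/
def AlmostMultOn {Γ : Type*} [Group Γ] {n : ℕ} (ρ : Γ → Mat n)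
    (c : (Γ × Γ) →₀ ℤ) (ε : ℝ) : Prop :=
  ∀ p ∈ c.support, IsUnit (ρ p.1) ∧ IsUnit (ρ p.2) ∧
    ‖ρ (p.1 * p.2) * Ring.inverse (ρ p.1) * Ring.inverse (ρ p.2) - 1‖ < ε

/-- The pairing `⟨ρ,c⟩` between an almost multiplicative map and a 2-chain. -/
def pairRho {Γ : Type*} [Group Γ] {n : ℕ} (ρ : Γ → Mat n) (c : (Γ × Γ) →₀ ℤ) : ℂ :=
  (1 / (2 * Real.pi * Complex.I)) *
    c.sum fun p x => (x : ℂ) *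
      clmTrace (matLog (ρ (p.1 * p.2) * Ring.inverse (ρ p.2) * Ring.inverse (ρ p.1)))

/-- A sequence of unitary-valued maps forms an asymptotic representation. -/
def IsAsymptoticRep {Γ : Type*} [Group Γ] (N : ℕ → ℕ) (ρ : ∀ k, Γ → Mat (N k)) : Prop :=
  (∀ k g, ρ k g ∈ unitary (Mat (N k))) ∧
    ∀ g h : Γ, Filter.Tendsto (fun k => ‖ρ k (g * h) - ρ k g * ρ k h‖)
      Filter.atTop (nhds 0)

/-- An asymptotic representation is perturbable to a genuine representation. -/
def Perturbable {Γ : Type*} [Group Γ] (N : ℕ → ℕ) (ρ : ∀ k, Γ → Mat (N k)) : Prop :=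
  ∃ ρ' : ∀ k, Γ →* unitary (Mat (N k)),
    ∀ g : Γ, Filter.Tendsto (fun k => ‖ρ k g - (ρ' k g : Mat (N k))‖)
      Filter.atTop (nhds 0)

/-- Matricial stability. -/
def MatriciallyStable (Γ : Type*) [Group Γ] : Prop :=
  ∀ (N : ℕ → ℕ) (ρ : ∀ k, Γ → Mat (N k)), IsAsymptoticRep N ρ → Perturbable N ρ

/-- A group is polycyclic if it has a finite subnormal chain with cyclic quotients. -/
def IsPolycyclic (G : Type*) [Group G] : Prop :=
  ∃ (m : ℕ) (s : Fin (m + 1) → Subgroup G),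
    s 0 = ⊤ ∧ s (Fin.last m) = ⊥ ∧
    ∀ i : Fin m, s i.succ ≤ s i.castSucc ∧
      ∃ _ : ((s i.succ).subgroupOf (s i.castSucc)).Normal,
        IsCyclic (↥(s i.castSucc) ⧸ (s i.succ).subgroupOf (s i.castSucc))

/-- A group is virtually polycyclic if it has a polycyclic subgroup of finite index. -/
def IsVirtuallyPolycyclic (G : Type*) [Group G] : Prop :=
  ∃ H : Subgroup G, H.FiniteIndex ∧ IsPolycyclic H


theorem cohom_extract {Γ : Type} [Group Γ]
    (hcoh : ∃ x : groupCohomology (Rep.trivial ℤ Γ ℤ) 2, ∀ n : ℕ, 1 ≤ n → n • x ≠ 0) :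
    ∃ σ : Γ → Γ → ℤ, (∀ g h j, σ (g * h) j + σ g h = σ h j + σ g (h * j)) ∧
      ∀ n : ℕ, 1 ≤ n → ¬ ∃ b : Γ → ℤ, ∀ g h, b g + b h - b (g * h) = n * σ g h := by
  obtain ⟨x, hx⟩ := hcoh
  induction x using groupCohomology.H2_induction_on with
  | h x =>
    refine ⟨fun g h => x (g, h), fun g h j => ?_, ?_⟩
    · have := (groupCohomology.mem_cocycles₂_iff (A := Rep.trivial ℤ Γ ℤ) x).1 x.2 g h j
      exact this
    · rintro n hn ⟨b, hb⟩
      apply hx n hn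
      rw [← map_nsmul]
      rw [groupCohomology.H2π_eq_zero_iff]
      refine ⟨b, ?_⟩
      funext ⟨g, h⟩
      have h1 := hb g h
      have h2 : (groupCohomology.d₁₂ (Rep.trivial ℤ Γ ℤ)).hom b (g, h) = b h - b (g * h) + b g := rfl
      have h3 : (n • x) (g, h) = (n : ℤ) * x (g, h) := by
        show n • (x (g, h)) = _
        exact nsmul_eq_mul _ _
      rw [h2]
      refine Eq.trans ?_ h3.symm
      rw [← h1]
      show (b h - b (g*h) + b g : ℤ) = _
      ring

theorem local_global {Γ : Type} [Group Γ] (σ : Γ → Γ → ℤ)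
    (hloc : ∀ F : Finset (Γ × Γ), ∃ b : Γ → ℝ, ∀ p ∈ F, b p.1 + b p.2 - b (p.1 * p.2) = σ p.1 p.2) :
    ∃ b : Γ → ℚ, ∀ g h, b g + b h - b (g * h) = σ g h := by
  let D : ((Γ × Γ) →₀ ℚ) →ₗ[ℚ] (Γ →₀ ℚ) := Finsupp.lsum ℚ (fun p => 
    (Finsupp.lsingle p.1 + Finsupp.lsingle p.2 - Finsupp.lsingle (p.1 * p.2) : ℚ →ₗ[ℚ] (Γ →₀ ℚ)))
  let s : Module.Dual ℚ ((Γ × Γ) →₀ ℚ) := Finsupp.lsum ℚ (fun p => (σ p.1 p.2 : ℚ) • LinearMap.id)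
  have hs : s ∈ LinearMap.range D.dualMap := by
    rw [LinearMap.range_dualMap_eq_dualAnnihilator_ker, Submodule.mem_dualAnnihilator]
    intro c hc
    obtain ⟨b, hb⟩ := hloc c.support
    let B : (Γ →₀ ℚ) →ₗ[ℚ] ℝ := Finsupp.lsum ℚ (fun g => LinearMap.toSpanSingleton ℚ ℝ (b g))
    have h0 : B (D c) = 0 := by rw [LinearMap.mem_ker.1 hc, map_zero]
    have h1 : B (D c) = ((s c : ℚ) : ℝ) := by
      simp only [D, s, Finsupp.lsum_apply, Finsupp.sum, map_sum, Rat.cast_sum]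
      refine Finset.sum_congr rfl fun p hp => ?_
      simp only [B, LinearMap.sub_apply, LinearMap.add_apply, map_sub, map_add, Finsupp.lsingle_apply,
        Finsupp.lsum_apply, Finsupp.sum_single_index, map_zero, LinearMap.toSpanSingleton_apply,
        LinearMap.smul_apply, LinearMap.id_apply, Rat.smul_def]
      push_cast
      have := hb p hp
      rw [← this]; ring
    rw [h0] at h1
    exact_mod_cast h1.symm
  obtain ⟨β, hβ⟩ := hs
  refine ⟨fun g => β (Finsupp.single g 1), fun g h => ?_⟩
  have := LinearMap.congr_fun hβ (Finsupp.single (g, h) 1)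
  simpa [D, s] using this

theorem rat_to_int {Γ : Type} [Group Γ] (σ : Γ → Γ → ℤ) (H : Subgroup Γ) [H.FiniteIndex]
    (hfg : Group.FG H) (b : Γ → ℚ) (hb : ∀ g h, b g + b h - b (g * h) = σ g h) :
    ∃ n : ℕ, 1 ≤ n ∧ ∃ b : Γ → ℤ, ∀ g h, b g + b h - b (g * h) = n * σ g h := by
  have sub : ∀ n : ℕ, ∃ K : Subgroup Γ, ∀ g, g ∈ K ↔ ∃ k : ℤ, n * b g = k := by
    intro n
    have h1 : b 1 = σ 1 1 := by have := hb 1 1; simp at this; linarith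
    refine ⟨{ carrier := {g | ∃ k : ℤ, n * b g = k}, mul_mem' := ?_, one_mem' := ?_, inv_mem' := ?_}, fun g => Iff.rfl⟩
    · rintro x y ⟨k, hk⟩ ⟨l, hl⟩
      refine ⟨k + l - n * σ x y, ?_⟩
      push_cast
      rw [← hk, ← hl, ← hb x y]; ring
    · exact ⟨n * σ 1 1, by rw [h1]; push_cast; ring⟩
    · rintro x ⟨k, hk⟩
      refine ⟨n * σ x x⁻¹ + n * σ 1 1 - k, ?_⟩
      push_cast
      rw [← hk, ← hb x x⁻¹, ← h1, mul_inv_cancel]; ring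
  obtain ⟨S, hS⟩ := (Group.fg_iff_subgroup_fg H).1 hfg
  let n1 := ∏ g ∈ S, (b g).den
  have hn1 : n1 ≠ 0 := Finset.prod_ne_zero_iff.2 fun g _ => (b g).den_nz
  have hH : ∀ g ∈ H, ∃ k : ℤ, (n1 : ℚ) * b g = k := by
    obtain ⟨K, hK⟩ := sub n1
    have : H ≤ K := by
      rw [← hS, Subgroup.closure_le]
      intro g hg
      rw [SetLike.mem_coe, hK]
      obtain ⟨c, hc⟩ := Finset.dvd_prod_of_mem (fun g => (b g).den) hg
      refine ⟨c * (b g).num, ?_⟩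
      simp only [n1]
      rw [hc]
      push_cast
      rw [← Rat.mul_den_eq_num]; ring
    intro g hg
    exact (hK g).1 (this hg)
  let m := H.index.factorial
  have hm : ∀ g : Γ, g ^ m ∈ H := fun g =>
    Subgroup.pow_mem_of_index_ne_zero_of_dvd Subgroup.FiniteIndex.index_ne_zero g
      (fun k h0 h1 => Nat.dvd_factorial h0 h1)
  have hpow : ∀ (g : Γ) (j : ℕ), ∃ k : ℤ, b (g ^ j) = j * b g + k := by
    intro g j
    induction j with
    | zero => exact ⟨σ 1 1, by have := hb 1 1; simp at this ⊢; linarith⟩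
    | succ j ih =>
      obtain ⟨k, hk⟩ := ih
      refine ⟨k - σ (g ^ j) g, ?_⟩
      have := hb (g ^ j) g
      rw [← pow_succ] at this
      push_cast
      linarith
  have hall : ∀ g, ∃ k : ℤ, ((n1 * m : ℕ) : ℚ) * b g = k := by
    intro g
    obtain ⟨k, hk⟩ := hH _ (hm g)
    obtain ⟨l, hl⟩ := hpow g m
    refine ⟨k - n1 * l, ?_⟩
    push_cast
    rw [← hk, hl]; ring
  choose B hB using hall
  refine ⟨n1 * m, Nat.one_le_iff_ne_zero.2 (mul_ne_zero hn1 (Nat.factorial_ne_zero _)), B, fun g h => ?_⟩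
  have : ((B g + B h - B (g * h) : ℤ) : ℚ) = ((((n1 * m : ℕ) : ℤ) * σ g h : ℤ) : ℚ) := by
    push_cast [← hB, ← hb g h]
    ring
  exact_mod_cast this

section abs
variable {A : Type*} [CStarAlgebra A]

def trArg (τ : A →L[ℂ] ℂ) (u : unitary A) : ℝ := (τ (Unitary.argSelfAdjoint u : A)).re

def GoodTr (τ : A →L[ℂ] ℂ) (δ : A →* ℂ) : Prop :=
  ∀ x : selfAdjoint A, δ (selfAdjoint.expUnitary x : A) = Complex.exp (Complex.I * ((τ x).re : ℂ))

theorem det_trArg (τ : A →L[ℂ] ℂ) (δ : A →* ℂ) (hg : GoodTr τ δ) (u : unitary A) (hu : ‖(u : A) - 1‖ < 2) :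
    δ (u : A) = Complex.exp (Complex.I * (trArg τ u : ℂ)) := by
  conv_lhs => rw [← expUnitary_argSelfAdjoint hu]
  rw [hg]; rfl

theorem trArg_cont (τ : A →L[ℂ] ℂ) : ContinuousOn (trArg τ) (Metric.ball 1 2) := by
  have : Continuous fun x : selfAdjoint A => (τ (x : A)).re :=
    Complex.continuous_re.comp (τ.continuous.comp continuous_subtype_val)
  exact this.comp_continuousOn Unitary.continuousOn_argSelfAdjoint

theorem trArg_exp (τ : A →L[ℂ] ℂ) {x : selfAdjoint A} (hx : ‖x‖ < Real.pi) :
    trArg τ (selfAdjoint.expUnitary x) = (τ x).re := by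
  rw [trArg, argSelfAdjoint_expUnitary hx]

theorem norm_mul_sub_one (u v : unitary A) :
    ‖((u * v : unitary A) : A) - 1‖ ≤ ‖(u : A) - 1‖ + ‖(v : A) - 1‖ := by
  have : ((u * v : unitary A) : A) - 1 = ((u : A) - 1) * v + ((v : A) - 1) := by
    simp [sub_mul]
  rw [this]
  refine (norm_add_le _ _).trans ?_
  rw [CStarRing.norm_mul_coe_unitary]

theorem trArg_mul (τ : A →L[ℂ] ℂ) (δ : A →* ℂ) (hg : GoodTr τ δ)
    (u v : unitary A) (hu : ‖(u : A) - 1‖ < 1) (hv : ‖(v : A) - 1‖ < 1) :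
    trArg τ (u * v) = trArg τ u + trArg τ v := by
  let U : ℝ → unitary A := fun t => selfAdjoint.expUnitary (t • Unitary.argSelfAdjoint u)
  let V : ℝ → unitary A := fun t => selfAdjoint.expUnitary (t • Unitary.argSelfAdjoint v)
  have hU : ∀ t ∈ Set.Icc (0:ℝ) 1, ‖(U t : A) - 1‖ < 1 := fun t ht => 
    (Unitary.norm_expUnitary_smul_argSelfAdjoint_sub_one_le u ht (by linarith)).trans_lt hu
  have hV : ∀ t ∈ Set.Icc (0:ℝ) 1, ‖(V t : A) - 1‖ < 1 := fun t ht => 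
    (Unitary.norm_expUnitary_smul_argSelfAdjoint_sub_one_le v ht (by linarith)).trans_lt hv
  have hUV : ∀ t ∈ Set.Icc (0:ℝ) 1, ‖((U t * V t : unitary A) : A) - 1‖ < 2 := fun t ht => by
    have := norm_mul_sub_one (U t) (V t)
    have := hU t ht
    have := hV t ht
    linarith
  have hUc : Continuous U := by fun_prop
  have hVc : Continuous V := by fun_prop
  let f : ℝ → ℝ := fun t => (trArg τ (U t * V t) - trArg τ (U t) - trArg τ (V t)) / (2 * Real.pi)
  have ball : ∀ w : unitary A, ‖(w : A) - 1‖ < 2 → w ∈ Metric.ball (1 : unitary A) 2 := by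
    intro w hw
    rw [Metric.mem_ball, Subtype.dist_eq, dist_eq_norm]; exact hw
  have hf : ContinuousOn f (Set.Icc 0 1) := by
    refine ContinuousOn.div_const (ContinuousOn.sub (ContinuousOn.sub ?_ ?_) ?_) _
    · exact (trArg_cont τ).comp (hUc.mul hVc).continuousOn fun t ht => ball _ (hUV t ht)
    · exact (trArg_cont τ).comp hUc.continuousOn fun t ht => ball _ ((hU t ht).trans (by norm_num))
    · exact (trArg_cont τ).comp hVc.continuousOn fun t ht => ball _ ((hV t ht).trans (by norm_num))
  have hint : ∀ t ∈ Set.Icc (0:ℝ) 1, ∃ k : ℤ, f t = k := by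
    intro t ht
    have h1 := det_trArg τ δ hg _ (hUV t ht)
    have h2 := det_trArg τ δ hg _ ((hU t ht).trans (by norm_num))
    have h3 := det_trArg τ δ hg _ ((hV t ht).trans (by norm_num))
    have h4 : δ ((U t * V t : unitary A) : A) = δ (U t : A) * δ (V t : A) := by
      rw [← map_mul, Submonoid.coe_mul]
    rw [h1, h2, h3, ← Complex.exp_add, Complex.exp_eq_exp_iff_exists_int] at h4
    obtain ⟨k, hk⟩ := h4
    refine ⟨k, ?_⟩
    have hI : Complex.I * ((trArg τ (U t * V t) - trArg τ (U t) - trArg τ (V t) : ℝ) : ℂ) = Complex.I * ((k * (2 * Real.pi) : ℝ) : ℂ) := by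
      push_cast
      linear_combination hk
    have := mul_left_cancel₀ Complex.I_ne_zero hI
    have h5 : (trArg τ (U t * V t) - trArg τ (U t) - trArg τ (V t) : ℝ) = (k * (2 * Real.pi) : ℝ) := by exact_mod_cast this
    simp only [f]
    rw [h5]; field_simp
  have hpre : (f '' Set.Icc 0 1).Subsingleton := by
    have hc : IsPreconnected (f '' Set.Icc 0 1) := isPreconnected_Icc.image _ hf
    have : f '' Set.Icc 0 1 ⊆ Set.range ((↑) : ℤ → ℝ) := by
      rintro _ ⟨t, ht, rfl⟩
      obtain ⟨k, hk⟩ := hint t ht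
      exact ⟨k, hk.symm⟩
    have hd : (Set.range ((↑) : ℤ → ℝ)).Countable := Set.countable_range _
    exact (hd.mono this).isTotallyDisconnected _ (Set.Subset.refl _) hc 
  have h01 := hpre (Set.mem_image_of_mem f (Set.left_mem_Icc.2 zero_le_one)) (Set.mem_image_of_mem f (Set.right_mem_Icc.2 zero_le_one))
  have hz : trArg τ (1 : unitary A) = 0 := by
    have := trArg_exp τ (x := 0) (by simpa using Real.pi_pos)
    rw [selfAdjoint.expUnitary_zero] at this
    rw [this]; simp
  have h0 : f 0 = 0 := by
    simp [f, U, V, hz]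
  have h1 : f 1 = (trArg τ (u * v) - trArg τ u - trArg τ v) / (2 * Real.pi) := by
    simp only [f, U, V, one_smul]
    rw [expUnitary_argSelfAdjoint (by linarith), expUnitary_argSelfAdjoint (by linarith)]
  rw [h0, h1] at h01
  have := Real.pi_pos
  field_simp at h01
  linarith

theorem trArg_conj (τ : A →L[ℂ] ℂ) (hτ : ∀ a b, τ (a * b) = τ (b * a)) (w u : unitary A) 
    (hu : ‖(u : A) - 1‖ < 2) : trArg τ (w * u * w⁻¹) = trArg τ u := by
  have h : ((Unitary.argSelfAdjoint (w * u * w⁻¹)) : A) = (w : A) * (Unitary.argSelfAdjoint u : A) * (star w : A) := by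
    have hc : ContinuousOn (fun z : ℂ => (z.arg : ℂ)) (spectrum ℂ (u : A)) :=
      Complex.continuous_ofReal.comp_continuousOn <| Complex.continuousOn_arg.mono <| (Unitary.spectrum_subset_slitPlane_iff_norm_lt_two u.2).mpr hu
    have := StarAlgHomClass.map_cfc (S := ℂ) (Unitary.conjStarAlgAut ℂ A w) (fun z : ℂ => (z.arg : ℂ)) (u : A) hc 
      (by
        have : (⇑(Unitary.conjStarAlgAut ℂ A w) : A → A) = fun x => (w : A) * x * (star w : A) := by
          ext x; simp [Unitary.conjStarAlgAut_apply]
        rw [this]; fun_prop)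
    have h2 : ((w * u * w⁻¹ : unitary A) : A) = (w : A) * u * (star w : A) := by
      rw [← Unitary.star_eq_inv]; rfl
    rw [Unitary.argSelfAdjoint_coe, h2]
    simpa [Unitary.conjStarAlgAut_apply] using this.symm
  rw [trArg, h, hτ, ← mul_assoc]
  simp [trArg]

theorem trArg_scalar (τ : A →L[ℂ] ℂ) (θ : ℝ) (hθ : |θ| < Real.pi) (w : unitary A) (hw : (w : A) = Complex.exp (θ * Complex.I) • 1) :
    trArg τ w = θ * (τ 1).re := by
  let x : selfAdjoint A := θ • 1
  have hx : ‖x‖ < Real.pi := by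
    have hp := Real.pi_pos
    rcases subsingleton_or_nontrivial A with hs | hs
    · rw [Subsingleton.elim x 0, norm_zero]; exact hp
    show ‖(x : A)‖ < _
    simpa [x, norm_smul] using hθ
  have : w = selfAdjoint.expUnitary x := by
    ext
    rw [hw, selfAdjoint.expUnitary_coe]
    have h1 : Complex.I • (x : A) = algebraMap ℂ A (θ * Complex.I) := by
      simp [x, Algebra.algebraMap_eq_smul_one, mul_smul, smul_comm Complex.I]
    let : NormedAlgebra ℚ A := NormedAlgebra.restrictScalars ℚ ℂ A
    rw [h1, ← NormedSpace.algebraMap_exp_comm, Algebra.algebraMap_eq_smul_one, Complex.exp_eq_exp_ℂ]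
  rw [this, trArg_exp τ hx]
  have : (x : A) = (θ : ℂ) • 1 := by simp [x]
  rw [this, map_smul]
  simp
end abs

abbrev toM {N : ℕ} (A : Mat N) : Matrix (Fin N) (Fin N) ℂ :=
  (Matrix.toEuclideanCLM (n := Fin N) (𝕜 := ℂ)).symm A

theorem toM_cont {N : ℕ} : Continuous (toM (N := N)) :=
  LinearMap.continuous_of_finiteDimensional
    ((Matrix.toEuclideanCLM (n := Fin N) (𝕜 := ℂ)).symm.toAlgEquiv.toLinearMap)

theorem toM_herm {N : ℕ} (x : selfAdjoint (Mat N)) : (toM (x : Mat N)).IsHermitian := by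
  obtain ⟨M, hM⟩ := EquivLike.surjective (Matrix.toEuclideanCLM (n := Fin N) (𝕜 := ℂ)) (x : Mat N)
  have h := x.2.star_eq
  have h2 : toM (x : Mat N) = M := by rw [← hM]; exact StarAlgEquiv.symm_apply_apply _ _
  rw [← hM] at h
  rw [h2]
  apply EquivLike.injective (Matrix.toEuclideanCLM (n := Fin N) (𝕜 := ℂ))
  exact ((Matrix.toEuclideanCLM (n := Fin N) (𝕜 := ℂ)).map_star' M).trans h

theorem det_exp_herm {N : ℕ} {M : Matrix (Fin N) (Fin N) ℂ} (hM : M.IsHermitian) :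
    (NormedSpace.exp (Complex.I • M)).det = Complex.exp (Complex.I * (M.trace.re : ℂ)) := by
  set U := hM.eigenvectorUnitary with hUd
  have hU : IsUnit (U : Matrix (Fin N) (Fin N) ℂ) := ⟨Unitary.toUnits U, rfl⟩
  have hUs : (star U : Matrix (Fin N) (Fin N) ℂ) = (U : Matrix (Fin N) (Fin N) ℂ)⁻¹ := by
    symm; apply Matrix.inv_eq_left_inv; simp
  have h2 : Complex.I • M
    = (U : Matrix (Fin N) (Fin N) ℂ) * (Matrix.diagonal (fun i => Complex.I * (hM.eigenvalues i : ℂ))) * (U : Matrix (Fin N) (Fin N) ℂ)⁻¹ := by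
    conv_lhs => rw [hM.spectral_theorem]
    rw [Unitary.conjStarAlgAut_apply, ← hUs, ← smul_mul_assoc, ← mul_smul_comm, ← Matrix.diagonal_smul]
    rfl
  have ht : M.trace.re = ∑ i, hM.eigenvalues i := by
    rw [hM.trace_eq_sum_eigenvalues]
    norm_cast
  rw [h2, Matrix.exp_conj _ _ hU, Matrix.det_conj hU, Matrix.exp_diagonal, Matrix.det_diagonal,
    ht, Complex.ofReal_sum, Finset.mul_sum, Complex.exp_sum]
  refine Finset.prod_congr rfl fun i _ => ?_
  rw [Pi.coe_exp, Complex.exp_eq_exp_ℂ]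

open scoped Matrix.Norms.L2Operator in
theorem toM_exp {N : ℕ} (x : Mat N) : toM (NormedSpace.exp x) = NormedSpace.exp (toM x) := by
  let : NormedAlgebra ℚ (Mat N) := NormedAlgebra.restrictScalars ℚ ℂ (Mat N)
  exact NormedSpace.map_exp ((Matrix.toEuclideanCLM (n := Fin N) (𝕜 := ℂ)).symm) toM_cont x

theorem exists_trace (N : ℕ) : ∃ (τ : Mat N →L[ℂ] ℂ) (δ : Mat N →* ℂ), GoodTr τ δ ∧
    (∀ a b, τ (a * b) = τ (b * a)) ∧ τ 1 = N := by
  let t : Mat N →ₗ[ℂ] ℂ := (Matrix.traceLinearMap (Fin N) ℂ ℂ) ∘ₗ 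
    ((Matrix.toEuclideanCLM (n := Fin N) (𝕜 := ℂ)).symm.toAlgEquiv.toLinearMap)
  have ht : ∀ x, t x = (toM x).trace := fun x => rfl
  refine ⟨⟨t, LinearMap.continuous_of_finiteDimensional t⟩, 
    (Matrix.detMonoidHom).comp (Matrix.toEuclideanCLM (n := Fin N) (𝕜 := ℂ)).symm.toRingEquiv.toMonoidHom, ?_, ?_, ?_⟩
  · intro x
    show (toM _).det = Complex.exp (Complex.I * ((toM (x : Mat N)).trace.re : ℂ))
    rw [← det_exp_herm (toM_herm x), selfAdjoint.expUnitary_coe, toM_exp]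
    congr 2
  · intro a b
    show (toM _).trace = (toM _).trace
    have h : ∀ a b : Mat N, toM (a * b) = toM a * toM b := fun a b => map_mul _ a b
    rw [h, h, Matrix.trace_mul_comm]
  · show (toM _).trace = _
    have : toM (1 : Mat N) = 1 := map_one _
    rw [this]; simp

def RFn (G : Type*) [Group G] : Prop := ∀ g : G, g ≠ 1 → ∃ K : Subgroup G, K.FiniteIndex ∧ g ∉ K

theorem RFn_finite_by_cyclic {G : Type*} [Group G] (N : Subgroup G) [Finite N] (t : G)
    (ht : ∀ g : G, ∃ k : ℤ, g * t ^ k ∈ N) : RFn G := by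
  have hfin : ∀ m : ℕ, 0 < m → (Subgroup.zpowers (t ^ m)).FiniteIndex := by
    intro m hm
    have : Function.Surjective (fun x : N × Fin m => 
        (QuotientGroup.mk ((x.1 : G) * t ^ (x.2 : ℕ)) : G ⧸ Subgroup.zpowers (t ^ m))) := by
      intro q
      obtain ⟨g, rfl⟩ := QuotientGroup.mk_surjective q
      obtain ⟨k, hk⟩ := ht g
      have hm' : (m : ℤ) ≠ 0 := by exact_mod_cast hm.ne'
      have h0 := Int.emod_nonneg (-k) hm'
      have h1 := Int.emod_lt_of_pos (-k) (by exact_mod_cast hm : (0:ℤ) < m)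
      refine ⟨(⟨_, hk⟩, ⟨((-k) % m).toNat, by omega⟩), ?_⟩
      simp only
      rw [QuotientGroup.eq, Subgroup.mem_zpowers_iff]
      refine ⟨(-k) / m, ?_⟩
      rw [← zpow_natCast t, ← zpow_natCast t, ← zpow_mul, Int.toNat_of_nonneg h0]
      have : (m : ℤ) * (-k / m) = -(-k % m) - k := by
        have := Int.mul_ediv_add_emod (-k) m
        omega
      rw [this, zpow_sub, zpow_neg]
      group
    have := Finite.of_surjective _ this
    exact Subgroup.finiteIndex_of_finite_quotient
  intro g hg
  by_cases hfo : IsOfFinOrder t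
  · have hfq := hfin (orderOf t) hfo.orderOf_pos
    rw [pow_orderOf_eq_one, Subgroup.zpowers_one_eq_bot] at hfq
    exact ⟨⊥, hfq, by simpa using hg⟩
  · by_cases hj : ∃ j : ℤ, g = t ^ j
    · obtain ⟨j, rfl⟩ := hj
      refine ⟨_, hfin (j.natAbs + 1) (by omega), ?_⟩
      rw [Subgroup.mem_zpowers_iff]
      rintro ⟨k, hk⟩
      rw [← zpow_natCast t, ← zpow_mul] at hk
      have := injective_zpow_iff_not_isOfFinOrder.2 hfo hk
      have hd : ((j.natAbs + 1 : ℕ) : ℤ) ∣ j := ⟨k, this.symm⟩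
      have hj0 : j = 0 := Int.eq_zero_of_abs_lt_dvd hd (by push_cast; rw [← Int.natCast_natAbs]; omega)
      exact hg (by rw [hj0, zpow_zero])
    · refine ⟨_, hfin 1 one_pos, ?_⟩
      rw [pow_one, Subgroup.mem_zpowers_iff]
      rintro ⟨k, hk⟩
      exact hj ⟨k, hk.symm⟩

theorem finite_hom {N Q : Type*} [Group N] [Group Q] [Finite Q] (h : Group.FG N) : Finite (N →* Q) := by
  obtain ⟨S, hS⟩ := h.out
  refine Finite.of_injective (fun (f : N →* Q) (s : S) => f s) ?_
  intro f g hfg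
  refine MonoidHom.eq_of_eqOn_dense hS ?_
  intro s hs
  exact congrFun hfg ⟨s, hs⟩

theorem fi_comap {G H : Type*} [Group G] [Group H] (f : G →* H) (hf : Function.Surjective f)
    (K : Subgroup H) (hK : K.FiniteIndex) : (K.comap f).FiniteIndex :=
  ⟨by rw [Subgroup.index_comap_of_surjective K hf]; exact hK.index_ne_zero⟩

theorem step_RF {G : Type*} [Group G] (N : Subgroup G) [N.Normal] (t : G)
    (ht : ∀ g : G, ∃ k : ℤ, g * t ^ k ∈ N) (hfg : Group.FG N) (hrf : RFn N) : RFn G := by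
  intro g hg
  have hM : ∃ M : Subgroup G, M.Normal ∧ M ≤ N ∧ (M.subgroupOf N).FiniteIndex ∧ g ∉ M := by
    by_cases hgN : g ∈ N
    · obtain ⟨K, hK, hgK⟩ := hrf ⟨g, hgN⟩ (by simpa [Subtype.ext_iff] using hg)
      let Q := N ⧸ K.normalCore
      have : Finite Q := Subgroup.finite_quotient_of_finiteIndex
      have : Finite (N →* Q) := finite_hom hfg
      let K' : Subgroup N := ⨅ f : N →* Q, f.ker
      have hK' : ∀ x, x ∈ K' ↔ ∀ f : N →* Q, f x = 1 := by
        intro x; simp [K', Subgroup.mem_iInf, MonoidHom.mem_ker]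
      refine ⟨K'.map N.subtype, ⟨?_⟩, ?_, ?_, ?_⟩
      · rintro _ ⟨x, hx, rfl⟩ y
        refine ⟨MulAut.conjNormal y x, ?_, by simp⟩
        rw [SetLike.mem_coe, hK'] at hx ⊢
        intro f
        exact hx (f.comp (MulAut.conjNormal y : N ≃* N).toMonoidHom)
      · exact Subgroup.map_subtype_le _
      · have : (K'.map N.subtype).subgroupOf N = K' :=
          Subgroup.comap_map_eq_self_of_injective N.subtype_injective _
        rw [this]
        exact Subgroup.finiteIndex_iInf fun f => Subgroup.finiteIndex_ker f
      · rintro ⟨x, hx, hxg⟩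
        have : x = ⟨g, hgN⟩ := Subtype.ext hxg
        rw [SetLike.mem_coe, hK'] at hx
        have h1 := hx (QuotientGroup.mk' _)
        rw [this] at h1
        have h2 := (QuotientGroup.eq_one_iff _).1 h1
        exact hgK (Subgroup.normalCore_le _ h2)
    · exact ⟨N, inferInstance, le_rfl, by rw [Subgroup.subgroupOf_self]; infer_instance, hgN⟩
  obtain ⟨M, hMn, hMN, hfi, hgM⟩ := hM
  have hFin : Finite (N.map (QuotientGroup.mk' M)) := by
    have : Finite (N ⧸ M.subgroupOf N) := Subgroup.finite_quotient_of_finiteIndex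
    let f : N ⧸ M.subgroupOf N → N.map (QuotientGroup.mk' M) :=
      Quotient.lift (fun n : N => ⟨QuotientGroup.mk' M n, ⟨n, n.2, rfl⟩⟩) (by
        intro a b hab
        have := (QuotientGroup.leftRel_apply).1 hab
        apply Subtype.ext
        exact QuotientGroup.eq.2 this)
    refine Finite.of_surjective f ?_
    rintro ⟨_, ⟨n, hn, rfl⟩⟩
    exact ⟨QuotientGroup.mk ⟨n, hn⟩, rfl⟩
  obtain ⟨K, hK, hgK⟩ := RFn_finite_by_cyclic (N.map (QuotientGroup.mk' M)) (QuotientGroup.mk' M t) (by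
    intro q
    obtain ⟨x, rfl⟩ := QuotientGroup.mk'_surjective M q
    obtain ⟨k, hk⟩ := ht x
    exact ⟨k, by rw [← map_zpow, ← map_mul]; exact ⟨_, hk, rfl⟩⟩) (QuotientGroup.mk' M g)
      (fun h => hgM ((QuotientGroup.eq_one_iff _).1 h))
  exact ⟨K.comap (QuotientGroup.mk' M), fi_comap _ (QuotientGroup.mk'_surjective M) K hK, hgK⟩

theorem step_FG {G : Type*} [Group G] (N : Subgroup G) (t : G)
    (ht : ∀ g : G, ∃ k : ℤ, g * t ^ k ∈ N) (hfg : Group.FG N) : Group.FG G := by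
  obtain ⟨S, hS⟩ := (Group.fg_iff_subgroup_fg N).1 hfg
  refine ⟨⟨insert t S, ?_⟩⟩
  rw [eq_top_iff]
  intro g _
  obtain ⟨k, hk⟩ := ht g
  have h1 : N ≤ Subgroup.closure (insert t S : Finset G) := by
    rw [← hS]; exact Subgroup.closure_mono (by simp)
  have h2 : t ∈ Subgroup.closure ((insert t S : Finset G) : Set G) := Subgroup.subset_closure (by simp)
  have := mul_mem (h1 hk) (zpow_mem h2 (-k))
  simpa using this

def RFFG (G : Type*) [Group G] : Prop := Group.FG G ∧ RFn G

theorem RFFG.equiv {G H : Type*} [Group G] [Group H] (e : G ≃* H) (h : RFFG G) : RFFG H := by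
  refine ⟨?_, fun g hg => ?_⟩
  · have := h.1
    exact Group.fg_of_surjective (f := e.toMonoidHom) e.surjective
  · obtain ⟨K, hK, hgK⟩ := h.2 (e.symm g) (by simpa using hg)
    exact ⟨K.comap e.symm.toMonoidHom, fi_comap _ e.symm.surjective K hK, hgK⟩

theorem poly_ext {E H : Type*} [Group E] [Group H] (p : E →* H) (hp : Function.Surjective p)
    (hk : RFFG p.ker) (hH : IsPolycyclic H) : RFFG E := by
  obtain ⟨m, s, h0, hm, hs⟩ := hH
  have key : ∀ i, RFFG ((s i).comap p) := by
    intro i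
    induction i using Fin.reverseInduction with
    | last => rw [hm]; exact hk
    | cast i ih =>
      obtain ⟨hle, hn, hc⟩ := hs i
      have hle' : (s i.succ).comap p ≤ (s i.castSucc).comap p := Subgroup.comap_mono hle
      have ih' := RFFG.equiv (Subgroup.subgroupOfEquivOfLe hle').symm ih
      have hnorm : (((s i.succ).comap p).subgroupOf ((s i.castSucc).comap p)).Normal := by
        refine ⟨fun a ha b => ?_⟩
        have := hn.conj_mem ⟨p a, a.2⟩ ha ⟨p b, b.2⟩
        rw [Subgroup.mem_subgroupOf] at this ⊢
        simpa using this
      obtain ⟨q, hq⟩ := hc.exists_generator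
      obtain ⟨τ, rfl⟩ := QuotientGroup.mk_surjective q
      obtain ⟨t, htτ⟩ := hp τ
      have ht : ∀ g : (s i.castSucc).comap p, ∃ k : ℤ, 
          g * (⟨t, by rw [Subgroup.mem_comap, htτ]; exact τ.2⟩ : (s i.castSucc).comap p) ^ k ∈
            ((s i.succ).comap p).subgroupOf ((s i.castSucc).comap p) := by
        intro g
        obtain ⟨k, hk⟩ := Subgroup.mem_zpowers_iff.1 (hq (QuotientGroup.mk ⟨p g, g.2⟩))
        refine ⟨-k, ?_⟩
        have h1 : (QuotientGroup.mk ((⟨p g, g.2⟩ : s i.castSucc) * τ ^ (-k)) : ↥(s i.castSucc) ⧸ (s i.succ).subgroupOf (s i.castSucc)) = 1 := by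
          rw [QuotientGroup.mk_mul, QuotientGroup.mk_zpow, ← hk]; simp
        rw [QuotientGroup.eq_one_iff, Subgroup.mem_subgroupOf] at h1
        rw [Subgroup.mem_subgroupOf, Subgroup.mem_comap]
        simpa [htτ] using h1
      exact ⟨step_FG _ _ ht ih'.1, step_RF _ _ ht ih'.1 ih'.2⟩
  have := key 0
  rw [h0, Subgroup.comap_top] at this
  exact this.equiv Subgroup.topEquiv

theorem RFFG_zpowers {G : Type*} [Group G] (z : G) : RFFG (Subgroup.zpowers z) := by
  have ht : ∀ g : Subgroup.zpowers z, ∃ k : ℤ, g * (⟨z, Subgroup.mem_zpowers z⟩ : Subgroup.zpowers z) ^ k ∈ (⊥ : Subgroup (Subgroup.zpowers z)) := by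
    rintro ⟨_, k, rfl⟩
    refine ⟨-k, ?_⟩
    rw [Subgroup.mem_bot, Subtype.ext_iff]
    simp
  exact ⟨step_FG _ _ ht inferInstance, RFn_finite_by_cyclic _ _ ht⟩

structure CExt (Γ : Type) where
  fst : Γ
  snd : ℤ

theorem exists_ext {Γ : Type} [Group Γ] (σ : Γ → Γ → ℤ)
    (hσ : ∀ g h j, σ (g * h) j + σ g h = σ h j + σ g (h * j)) :
    ∃ (E : Type) (_ : Group E) (p : E →* Γ) (z : E) (s : Γ → E), (∀ g, p (s g) = g) ∧
      (∀ x, z * x = x * z) ∧ (∀ g h, s g * s h = z ^ (σ g h) * s (g * h)) ∧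
      p.ker = Subgroup.zpowers z ∧ ∀ k : ℤ, z ^ k = 1 → k = 0 := by
  have e1 : ∀ g, σ 1 g = σ 1 1 := fun g => by have := hσ 1 1 g; simp at this; omega
  have e2 : ∀ g, σ g 1 = σ 1 1 := fun g => by have := hσ g 1 1; simp at this; omega
  let _ : Mul (CExt Γ) := ⟨fun x y => ⟨x.fst * y.fst, x.snd + y.snd + σ x.fst y.fst⟩⟩
  let _ : One (CExt Γ) := ⟨⟨1, -σ 1 1⟩⟩
  let _ : Inv (CExt Γ) := ⟨fun x => ⟨x.fst⁻¹, -x.snd - σ x.fst⁻¹ x.fst - σ 1 1⟩⟩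
  have mdef : ∀ x y : CExt Γ, x * y = ⟨x.fst * y.fst, x.snd + y.snd + σ x.fst y.fst⟩ := fun _ _ => rfl
  have odef : (1 : CExt Γ) = ⟨1, -σ 1 1⟩ := rfl
  have idef : ∀ x : CExt Γ, x⁻¹ = ⟨x.fst⁻¹, -x.snd - σ x.fst⁻¹ x.fst - σ 1 1⟩ := fun _ => rfl
  let G : Group (CExt Γ) := Group.ofLeftAxioms
    (by
      intro x y w
      have := hσ x.fst y.fst w.fst
      simp only [mdef, mul_assoc, CExt.mk.injEq, true_and]
      omega)
    (by
      rintro ⟨a, b⟩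
      simp only [mdef, odef, one_mul, e1, CExt.mk.injEq, true_and]
      omega)
    (by
      rintro ⟨a, b⟩
      simp only [mdef, odef, idef, inv_mul_cancel, CExt.mk.injEq, true_and]
      omega)
  let p : CExt Γ →* Γ := MonoidHom.mk' CExt.fst (fun _ _ => rfl)
  let zh : Multiplicative ℤ →* CExt Γ := MonoidHom.mk' (fun k => ⟨1, k.toAdd - σ 1 1⟩) (by
    intro a b
    show (⟨1, (a.toAdd + b.toAdd) - σ 1 1⟩ : CExt Γ) = ⟨1 * 1, a.toAdd - σ 1 1 + (b.toAdd - σ 1 1) + σ 1 1⟩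
    simp only [mul_one, CExt.mk.injEq, true_and]
    ring)
  let z : CExt Γ := ⟨1, 1 - σ 1 1⟩
  have hz : ∀ k : ℤ, z ^ k = ⟨1, k - σ 1 1⟩ := by
    intro k
    have h1 : z = zh (Multiplicative.ofAdd 1) := rfl
    rw [h1, ← map_zpow, ← ofAdd_zsmul]
    simp [zh]
  refine ⟨CExt Γ, G, p, z, fun g => ⟨g, 0⟩, fun g => rfl, ?_, ?_, ?_, ?_⟩
  · rintro ⟨a, b⟩
    show (⟨1 * a, 1 - σ 1 1 + b + σ 1 a⟩ : CExt Γ) = ⟨a * 1, b + (1 - σ 1 1) + σ a 1⟩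
    simp only [mul_one, one_mul, CExt.mk.injEq, true_and, e1, e2]
    ring
  · intro g h
    rw [hz]
    show (⟨g * h, 0 + 0 + σ g h⟩ : CExt Γ) = ⟨1 * (g * h), σ g h - σ 1 1 + 0 + σ 1 (g * h)⟩
    simp only [one_mul, CExt.mk.injEq, true_and, e1]
    ring
  · ext ⟨a, b⟩
    rw [MonoidHom.mem_ker, Subgroup.mem_zpowers_iff]
    constructor
    · intro h
      have h' : a = 1 := h
      exact ⟨b + σ 1 1, by rw [hz, h']; simp⟩
    · rintro ⟨k, hk⟩
      rw [hz] at hk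
      exact (congrArg CExt.fst hk).symm
  · intro k hk
    rw [hz] at hk
    have : k - σ 1 1 = - σ 1 1 := congrArg CExt.snd hk
    omega

theorem finite_quotients {Γ : Type} [Group Γ] (hvp : IsVirtuallyPolycyclic Γ) {E : Type} [Group E]
    (p : E →* Γ) (hp : Function.Surjective p) (z : E) (hker : p.ker = Subgroup.zpowers z)
    (hz : ∀ k : ℤ, z ^ k = 1 → k = 0) :
    (∃ H : Subgroup Γ, H.FiniteIndex ∧ Group.FG H) ∧
    ∀ M : ℕ, ∃ (Q : Type) (_ : Group Q) (_ : Finite Q) (φ : E →* Q), Function.Surjective φ ∧ M < orderOf (φ z) := by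
  obtain ⟨H, hH, hpoly⟩ := hvp
  let p' : H.comap p →* H := p.subgroupComap H
  have hp' : Function.Surjective p' := fun h => by
    obtain ⟨x, hx⟩ := hp h
    exact ⟨⟨x, by rw [Subgroup.mem_comap, hx]; exact h.2⟩, Subtype.ext hx⟩
  have hzH : z ∈ H.comap p := by
    have : z ∈ p.ker := by rw [hker]; exact Subgroup.mem_zpowers z
    rw [Subgroup.mem_comap, MonoidHom.mem_ker.1 this]; exact one_mem _
  have hker' : p'.ker = Subgroup.zpowers (⟨z, hzH⟩ : H.comap p) := by
    ext ⟨x, hx⟩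
    have : x ∈ p.ker ↔ x ∈ Subgroup.zpowers z := by rw [hker]
    rw [MonoidHom.mem_ker, Subgroup.mem_zpowers_iff] at this
    rw [MonoidHom.mem_ker, Subgroup.mem_zpowers_iff, Subtype.ext_iff]
    refine this.trans ?_
    simp [Subtype.ext_iff]
  have hE : RFFG (H.comap p) := poly_ext p' hp' (by rw [hker']; exact RFFG_zpowers _) hpoly
  refine ⟨⟨H, hH, ?_⟩, fun M => ?_⟩
  · have := hE.1
    exact Group.fg_of_surjective hp'
  have hex : ∀ i : Fin M, ∃ K : Subgroup E, K.FiniteIndex ∧ z ^ ((i : ℕ) + 1) ∉ K := by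
    intro i
    obtain ⟨K, hK, hzK⟩ := hE.2 (⟨z, hzH⟩ ^ ((i : ℕ) + 1)) (by
      intro h
      have h2 : z ^ (((i : ℕ) + 1 : ℕ) : ℤ) = 1 := by
        rw [zpow_natCast]; simpa [Subtype.ext_iff] using h
      have := hz _ h2
      omega)
    refine ⟨K.map (H.comap p).subtype, ?_, ?_⟩
    · refine ⟨?_⟩
      rw [Subgroup.index_map_subtype]
      exact mul_ne_zero hK.index_ne_zero (fi_comap p hp H hH).index_ne_zero
    · rintro ⟨x, hx, hxz⟩
      apply hzK
      have : (⟨z, hzH⟩ : H.comap p) ^ ((i : ℕ) + 1) = x := Subtype.ext (by simpa using hxz.symm)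
      rw [this]; exact hx
  choose K hK hzK using hex
  have hKf : (⨅ i, K i).FiniteIndex := Subgroup.finiteIndex_iInf hK
  have hQ : Finite (E ⧸ (⨅ i, K i).normalCore) := Subgroup.finite_quotient_of_finiteIndex
  refine ⟨E ⧸ (⨅ i, K i).normalCore, inferInstance, hQ, QuotientGroup.mk' _, QuotientGroup.mk'_surjective _, ?_⟩
  by_contra hlt
  have hpos := orderOf_pos (QuotientGroup.mk' (⨅ i, K i).normalCore z)
  set o := orderOf (QuotientGroup.mk' (⨅ i, K i).normalCore z) with ho
  have h1 := pow_orderOf_eq_one (QuotientGroup.mk' (⨅ i, K i).normalCore z)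
  rw [← ho, ← map_pow] at h1
  have h2 := Subgroup.normalCore_le _ ((QuotientGroup.eq_one_iff _).1 h1)
  rw [Subgroup.mem_iInf] at h2
  have h3 := h2 ⟨o - 1, by omega⟩
  apply hzK ⟨o - 1, by omega⟩
  have : o - 1 + 1 = o := by omega
  simpa [this] using h3

theorem exists_rep {Q : Type} [Group Q] [Finite Q] (c : Q) (hc : ∀ x, c * x = x * c) :
    ∃ (N : ℕ) (π : Q →* unitary (Mat N)), 1 ≤ N ∧
      ((π c : unitary (Mat N)) : Mat N) = Complex.exp (((2 * Real.pi / orderOf c : ℝ) : ℂ) * Complex.I) • 1 := by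
  have := Fintype.ofFinite Q
  set m := orderOf c with hm
  have hm0 : m ≠ 0 := (orderOf_pos c).ne'
  set ω := Complex.exp (((2 * Real.pi / m : ℝ) : ℂ) * Complex.I) with hω
  have hω' : IsPrimitiveRoot ω m := by
    convert Complex.isPrimitiveRoot_exp m hm0 using 2
    push_cast; ring
  have hω0 : ω ≠ 0 := Complex.exp_ne_zero _
  let V := EuclideanSpace ℂ Q
  let W : Submodule ℂ V :=
    { carrier := {f | ∀ x, f (c⁻¹ * x) = ω * f x}
      add_mem' := by
        intro a b ha hb x
        show a.ofLp (c⁻¹ * x) + b.ofLp (c⁻¹ * x) = ω * (a.ofLp x + b.ofLp x)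
        rw [ha x, hb x]; ring
      zero_mem' := by intro x; simp
      smul_mem' := by
        intro r a ha x
        show r * a.ofLp (c⁻¹ * x) = ω * (r * a.ofLp x)
        rw [ha x]; ring }
  have hc' : ∀ g x : Q, g * (c⁻¹ * x) = c⁻¹ * (g * x) := by
    intro g x
    have := hc (c⁻¹ * g)
    have h2 : c⁻¹ * g = g * c⁻¹ := by
      rw [eq_mul_inv_iff_mul_eq, mul_assoc, ← hc g]; simp
    rw [← mul_assoc, ← h2, mul_assoc]
  let L : Q → (V ≃ₗᵢ[ℂ] V) := fun g => LinearIsometryEquiv.piLpCongrLeft 2 ℂ ℂ (Equiv.mulLeft g)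
  have hL : ∀ g (f : V) x, L g f x = f (g⁻¹ * x) := fun g f x => rfl
  have hLW : ∀ g (f : V), f ∈ W → L g f ∈ W := by
    intro g f hf x
    rw [hL, hL, hc']
    exact hf _
  let Λ : Q → (W ≃ₗᵢ[ℂ] W) := fun g =>
    { toFun := fun f => ⟨L g f, hLW g f f.2⟩
      invFun := fun f => ⟨L g⁻¹ f, hLW g⁻¹ f f.2⟩
      map_add' := fun a b => Subtype.ext (map_add (L g) _ _)
      map_smul' := fun r a => Subtype.ext (map_smul (L g) _ _)
      left_inv := fun f => by
        apply Subtype.ext; ext x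
        simp [hL]
      right_inv := fun f => by
        apply Subtype.ext; ext x
        simp [hL]
      norm_map' := fun f => (L g).norm_map f }
  have hΛ : ∀ g (f : W) x, (Λ g f : V) x = (f : V) (g⁻¹ * x) := fun g f x => rfl
  let e := (stdOrthonormalBasis ℂ W).repr
  let R : Q →* (EuclideanSpace ℂ (Fin (Module.finrank ℂ W)) ≃ₗᵢ[ℂ] EuclideanSpace ℂ (Fin (Module.finrank ℂ W))) :=
    MonoidHom.mk' (fun g => (e.symm.trans (Λ g)).trans e) (by
      intro g h
      ext1 v
      show e (Λ (g * h) (e.symm v)) = e (Λ g (e.symm (e (Λ h (e.symm v)))))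
      rw [LinearIsometryEquiv.symm_apply_apply]
      congr 1
      apply Subtype.ext; ext x
      rw [hΛ, hΛ, hΛ, mul_inv_rev, mul_assoc])
  refine ⟨Module.finrank ℂ W, (Unitary.linearIsometryEquiv (𝕜 := ℂ)).symm.toMonoidHom.comp R, ?_, ?_⟩
  · have hz : ∀ k l : ℤ, c ^ k = c ^ l → ω ^ k = ω ^ l := by
      intro k l h
      have h1 : c ^ (k - l) = 1 := by rw [zpow_sub, h, mul_inv_cancel]
      have h2 := orderOf_dvd_iff_zpow_eq_one.2 h1
      have h3 := (hω'.zpow_eq_one_iff_dvd _).2 h2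
      rw [zpow_sub₀ hω0] at h3
      exact eq_of_div_eq_one h3
    let f : V := WithLp.toLp 2 fun x => if h : ∃ k : ℤ, x = c ^ k then ω ^ (-h.choose) else 0
    have hf1 : ∀ k : ℤ, f (c ^ k) = ω ^ (-k) := by
      intro k
      have h : ∃ l : ℤ, c ^ k = c ^ l := ⟨k, rfl⟩
      have : f (c ^ k) = ω ^ (-h.choose) := dif_pos h
      rw [this, zpow_neg, zpow_neg, hz _ _ h.choose_spec]
    have hf0 : ∀ x, (¬ ∃ k : ℤ, x = c ^ k) → f x = 0 := fun x hx => dif_neg hx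
    have hfW : f ∈ W := by
      intro x
      by_cases hx : ∃ k : ℤ, x = c ^ k
      · obtain ⟨k, rfl⟩ := hx
        have : c⁻¹ * c ^ k = c ^ (k - 1) := by rw [zpow_sub_one, ← zpow_neg_one, ← zpow_add, ← zpow_add, add_comm]
        rw [this, hf1, hf1, ← zpow_one_add₀ hω0]
        congr 1; ring
      · rw [hf0 x hx, hf0, mul_zero]
        rintro ⟨k, hk⟩
        exact hx ⟨k + 1, by rw [zpow_add_one, ← hk, ← hc]; simp⟩
    have hfne : (⟨f, hfW⟩ : W) ≠ 0 := by
      intro h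
      have h1 : f = 0 := congrArg Subtype.val h
      have h2 := hf1 0
      rw [h1] at h2
      simp at h2
    have : Nontrivial W := ⟨_, _, hfne⟩
    exact Module.finrank_pos
  · ext1 v
    show e (Λ c (e.symm v)) = ω • v
    have : Λ c (e.symm v) = ω • e.symm v := by
      apply Subtype.ext; ext x
      rw [hΛ]
      exact (e.symm v).2 x
    rw [this, map_smul, LinearIsometryEquiv.apply_symm_apply]


theorem smul_aux {N : ℕ} (c : ℂ) (x : Mat N) : (c - 1) • x = c • x - x := by
  ext1 v
  show (c - 1) • x v = c • x v - x v
  rw [sub_smul, one_smul]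

theorem scalar_zpow {N : ℕ} (w : unitary (Mat N)) (θ : ℝ)
    (hw : (w : Mat N) = Complex.exp ((θ : ℂ) * Complex.I) • 1) (k : ℤ) :
    ((w ^ k : unitary (Mat N)) : Mat N) = Complex.exp (((k * θ : ℝ) : ℂ) * Complex.I) • 1 := by
  induction k using Int.induction_on with
  | zero => simp
  | succ k ih =>
    rw [zpow_add_one, Submonoid.coe_mul, ih, hw, smul_mul_smul_comm, ← Complex.exp_add, mul_one]
    congr 2; push_cast; ring
  | pred k ih =>
    have h1 : ((w⁻¹ : unitary (Mat N)) : Mat N) = Complex.exp (-((θ : ℂ) * Complex.I)) • 1 := by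
      have h2 : (w : Mat N) * (Complex.exp (-((θ : ℂ) * Complex.I)) • (1 : Mat N)) = 1 := by
        rw [hw, smul_mul_smul_comm, ← Complex.exp_add, mul_one]; simp
      have h3 : ((w⁻¹ : unitary (Mat N)) : Mat N) * (w : Mat N) = 1 := by
        rw [← Submonoid.coe_mul]; simp
      calc ((w⁻¹ : unitary (Mat N)) : Mat N)
          = (w⁻¹ : unitary (Mat N)) * ((w : Mat N) * (Complex.exp (-((θ : ℂ) * Complex.I)) • (1 : Mat N))) := by
            rw [h2, mul_one]
        _ = _ := by rw [← mul_assoc, h3, one_mul]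
    rw [zpow_sub_one, Submonoid.coe_mul, ih, h1, smul_mul_smul_comm, ← Complex.exp_add, mul_one]
    congr 2; push_cast; ring

theorem proj_reps {Γ : Type} [Group Γ] (hvp : IsVirtuallyPolycyclic Γ) (σ : Γ → Γ → ℤ)
    (hσ : ∀ g h j, σ (g * h) j + σ g h = σ h j + σ g (h * j)) :
    (∃ H : Subgroup Γ, H.FiniteIndex ∧ Group.FG H) ∧
    ∀ k : ℕ, ∃ (N : ℕ) (θ : ℝ) (ρ : Γ → unitary (Mat N)), 1 ≤ N ∧ 0 < θ ∧
      θ ≤ 2 * Real.pi / ((k : ℝ) + 1) ∧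
      ∀ g h, ((ρ g * ρ h * (ρ (g * h))⁻¹ : unitary (Mat N)) : Mat N) =
        Complex.exp (((σ g h * θ : ℝ) : ℂ) * Complex.I) • 1 := by
  obtain ⟨E, _, p, z, s, hs, hzc, hsm, hker, hz⟩ := exists_ext σ hσ
  obtain ⟨hH, hq⟩ := finite_quotients hvp p (fun g => ⟨s g, hs g⟩) z hker hz
  refine ⟨hH, fun k => ?_⟩
  obtain ⟨Q, _, _, φ, hφ, hM⟩ := hq k
  obtain ⟨N, π, hN, hπ⟩ := exists_rep (φ z) (fun x => by
    obtain ⟨y, rfl⟩ := hφ x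
    rw [← map_mul, hzc, map_mul])
  have hk : (k : ℝ) + 1 ≤ orderOf (φ z) := by exact_mod_cast hM
  have hk0 : (0 : ℝ) < (k : ℝ) + 1 := by positivity
  refine ⟨N, 2 * Real.pi / orderOf (φ z), fun g => π (φ (s g)), hN, ?_, ?_, ?_⟩
  · have := Real.pi_pos
    have : (0 : ℝ) < orderOf (φ z) := lt_of_lt_of_le hk0 hk
    positivity
  · have := Real.pi_pos
    gcongr
  · intro g h
    have e : π (φ (s g)) * π (φ (s h)) = (π (φ z)) ^ (σ g h) * π (φ (s (g * h))) := by
      have := congrArg (fun x => π (φ x)) (hsm g h)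
      simp only [MonoidHom.map_mul, MonoidHom.map_zpow] at this
      exact this
    rw [← scalar_zpow (π (φ z)) _ hπ, e, mul_inv_cancel_right]

theorem local_eq {N : ℕ} {G : Type} [Group G] (τ : Mat N →L[ℂ] ℂ) (δ : Mat N →* ℂ) (hg : GoodTr τ δ)
    (hτ : ∀ a b, τ (a * b) = τ (b * a)) (hτ1 : τ 1 = N)
    (ρ : G → unitary (Mat N)) (π : G →* unitary (Mat N)) (g h : G) (t : ℝ)
    (hS : ((ρ g * ρ h * (ρ (g * h))⁻¹ : unitary (Mat N)) : Mat N) =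
        Complex.exp ((t : ℂ) * Complex.I) • 1)
    (ht : |t| < Real.pi) (ht1 : ‖Complex.exp ((t : ℂ) * Complex.I) - 1‖ < 1)
    (h1 : ‖(ρ g : Mat N) - π g‖ < 1) (h2 : ‖(ρ h : Mat N) - π h‖ < 1)
    (h3 : ‖(ρ (g * h) : Mat N) - π (g * h)‖ < 1) :
    trArg τ ((π g)⁻¹ * ρ g) + trArg τ ((π h)⁻¹ * ρ h) - trArg τ ((π (g * h))⁻¹ * ρ (g * h)) = t * N := by
  have hn : ∀ x, ‖(ρ x : Mat N) - π x‖ < 1 → ‖(((π x)⁻¹ * ρ x : unitary (Mat N)) : Mat N) - 1‖ < 1 := by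
    intro x hx
    have : (((π x)⁻¹ * ρ x : unitary (Mat N)) : Mat N) - 1
        = ((π x)⁻¹ : unitary (Mat N)) * ((ρ x : Mat N) - π x) := by
      rw [mul_sub, ← Submonoid.coe_mul, ← Submonoid.coe_mul]; simp
    rw [this, CStarRing.norm_coe_unitary_mul]
    exact hx
  have hn1 := hn g h1
  set S := ρ g * ρ h * (ρ (g * h))⁻¹ with hSdef
  have hSc : ∀ x : unitary (Mat N), S * x = x * S := by
    intro x
    apply Subtype.ext
    show (S : Mat N) * (x : Mat N) = (x : Mat N) * (S : Mat N)
    rw [hS]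
    simp
  have key : ((π h)⁻¹ * ((π g)⁻¹ * ρ g) * ((π h)⁻¹)⁻¹) * ((π h)⁻¹ * ρ h)
      = S * ((π (g * h))⁻¹ * ρ (g * h)) := by
    rw [← mul_assoc S, hSc, hSdef, map_mul]
    group
  have hconj : ‖(((π h)⁻¹ * ((π g)⁻¹ * ρ g) * ((π h)⁻¹)⁻¹ : unitary (Mat N)) : Mat N) - 1‖ < 1 := by
    have : (((π h)⁻¹ * ((π g)⁻¹ * ρ g) * ((π h)⁻¹)⁻¹ : unitary (Mat N)) : Mat N) - 1
        = ((π h)⁻¹ : unitary (Mat N)) * ((((π g)⁻¹ * ρ g : unitary (Mat N)) : Mat N) - 1)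
          * (((π h)⁻¹)⁻¹ : unitary (Mat N)) := by
      rw [mul_sub, sub_mul, mul_one, ← Submonoid.coe_mul, ← Submonoid.coe_mul, ← Submonoid.coe_mul,
        mul_inv_cancel]
      rfl
    rw [this, CStarRing.norm_mul_coe_unitary, CStarRing.norm_coe_unitary_mul]
    exact hn1
  have hS1 : ‖(S : Mat N) - 1‖ < 1 := by
    rw [hS]
    have : Complex.exp ((t : ℂ) * Complex.I) • (1 : Mat N) - 1
        = (Complex.exp ((t : ℂ) * Complex.I) - 1) • (1 : Mat N) := by
      rw [smul_aux]
    rw [this, norm_smul]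
    have h1 : ‖(1 : Mat N)‖ ≤ 1 := ContinuousLinearMap.norm_id_le
    nlinarith [norm_nonneg (Complex.exp ((t : ℂ) * Complex.I) - 1)]
  have e := congrArg (trArg τ) key
  rw [trArg_mul τ δ hg _ _ hconj (hn h h2), trArg_mul τ δ hg _ _ hS1 (hn _ h3),
    trArg_conj τ hτ _ _ (hn1.trans one_lt_two), trArg_scalar τ t ht S hS, hτ1] at e
  rw [Complex.natCast_re] at e
  linarith

/-- A virtually polycyclic group whose second integral cohomology (with trivial
coefficients) contains an element of infinite additive order is not matricially stable. -/
theorem stmt2 {Γ : Type} [Group Γ] (hvp : IsVirtuallyPolycyclic Γ)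
    (hcoh : ∃ x : groupCohomology (Rep.trivial ℤ Γ ℤ) 2, ∀ n : ℕ, 1 ≤ n → n • x ≠ 0) :
    ¬ MatriciallyStable Γ := by
  intro hst
  obtain ⟨σ, hσ, hnt⟩ := cohom_extract hcoh
  obtain ⟨⟨H, hH, hfg⟩, hP⟩ := proj_reps hvp σ hσ
  choose N θ ρ hN hθ0 hθ hρ using hP
  have hθlim : Filter.Tendsto θ Filter.atTop (nhds 0) := by
    refine squeeze_zero (fun k => (hθ0 k).le) hθ ?_
    have := (tendsto_one_div_add_atTop_nhds_zero_nat (𝕜 := ℝ)).const_mul (2 * Real.pi)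
    rw [mul_zero] at this
    simpa only [mul_one_div] using this
  have hσθ : ∀ g h, Filter.Tendsto (fun k => (σ g h : ℝ) * θ k) Filter.atTop (nhds 0) := by
    intro g h
    simpa using hθlim.const_mul (σ g h : ℝ)
  have hexp : ∀ g h, Filter.Tendsto
      (fun k => ‖Complex.exp (((σ g h * θ k : ℝ) : ℂ) * Complex.I) - 1‖) Filter.atTop (nhds 0) := by
    intro g h
    have hc : Continuous fun t : ℝ => ‖Complex.exp ((t : ℂ) * Complex.I) - 1‖ := by fun_prop
    have := (hc.tendsto 0).comp (hσθ g h)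
    simpa [Function.comp_def] using this
  obtain ⟨ρ', hρ'⟩ := hst N (fun k g => (ρ k g : Mat (N k))) ⟨fun k g => (ρ k g).2, fun g h => by
    refine squeeze_zero (fun k => norm_nonneg _) (fun k => ?_) (hexp g h)
    have h1 : (ρ k g : Mat (N k)) * ρ k h
        = Complex.exp (((σ g h * θ k : ℝ) : ℂ) * Complex.I) • (ρ k (g * h) : Mat (N k)) := by
      rw [← Submonoid.coe_mul, ← inv_mul_cancel_right (ρ k g * ρ k h) (ρ k (g * h)), Submonoid.coe_mul,
        ← one_mul ((ρ k (g * h) : Mat (N k))), ← smul_mul_assoc, ← hρ]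
      simp
    have h2 : (ρ k (g * h) : Mat (N k)) - ρ k g * ρ k h
        = -((Complex.exp (((σ g h * θ k : ℝ) : ℂ) * Complex.I) - 1) • ((ρ k (g * h) : Mat (N k)) * 1)) := by
      rw [h1, smul_aux, mul_one, neg_sub]
    rw [h2, norm_neg, norm_smul, CStarRing.norm_coe_unitary_mul]
    have h1 : ‖(1 : Mat (N k))‖ ≤ 1 := ContinuousLinearMap.norm_id_le
    nlinarith [norm_nonneg (Complex.exp (((σ g h * θ k : ℝ) : ℂ) * Complex.I) - 1)]⟩
  have hloc : ∀ F : Finset (Γ × Γ), ∃ b : Γ → ℝ, ∀ p ∈ F, b p.1 + b p.2 - b (p.1 * p.2) = σ p.1 p.2 := by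
    intro F
    have hρ1 : ∀ g, ∀ᶠ k in Filter.atTop, ‖(ρ k g : Mat (N k)) - ρ' k g‖ < 1 := fun g =>
      (hρ' g).eventually_lt_const one_pos
    have hev : ∀ᶠ k in Filter.atTop, ∀ p ∈ F, |(σ p.1 p.2 : ℝ) * θ k| < Real.pi ∧
        ‖Complex.exp (((σ p.1 p.2 * θ k : ℝ) : ℂ) * Complex.I) - 1‖ < 1 ∧
        ‖(ρ k p.1 : Mat (N k)) - ρ' k p.1‖ < 1 ∧ ‖(ρ k p.2 : Mat (N k)) - ρ' k p.2‖ < 1 ∧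
        ‖(ρ k (p.1 * p.2) : Mat (N k)) - ρ' k (p.1 * p.2)‖ < 1 := by
      rw [Filter.eventually_all_finset]
      intro p _
      have ha : Filter.Tendsto (fun k => |(σ p.1 p.2 : ℝ) * θ k|) Filter.atTop (nhds 0) := by
        simpa using (hσθ p.1 p.2).abs
      exact (ha.eventually_lt_const Real.pi_pos).and
        (((hexp p.1 p.2).eventually_lt_const one_pos).and
          ((hρ1 _).and ((hρ1 _).and (hρ1 _))))
    obtain ⟨k, hk⟩ := hev.exists
    obtain ⟨τ, δ, hg, hτ, hτ1⟩ := exists_trace (N k)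
    refine ⟨fun g => trArg τ ((ρ' k g)⁻¹ * ρ k g) / (N k * θ k), fun p hp => ?_⟩
    obtain ⟨a1, a2, a3, a4, a5⟩ := hk p hp
    have := local_eq τ δ hg hτ hτ1 (ρ k) (ρ' k) p.1 p.2 _ (hρ k p.1 p.2) a1 a2 a3 a4 a5
    have hN0 : (N k : ℝ) ≠ 0 := by
      have := hN k
      positivity
    have hθ1 := (hθ0 k).ne'
    rw [← add_div, ← sub_div, this]
    field_simp
  obtain ⟨b, hb⟩ := local_global σ hloc
  obtain ⟨n, hn, hb'⟩ := rat_to_int σ H hfg b hb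
  exact hnt n hn hb'
end
end

section
/- Let Γ be a finitely generated torsion-free nilpotent group that is neither trivial nor infinite cyclic. Then there exist a ℤ-valued 2-cocycle σ on Γ and a 2-cycle c on Γ with ⟨σ,c⟩ ≠ 0, such that σ is of finite type: for every N ∈ ℕ there exist an integer n > N, a finite group Q, and a surjective group homomorphism q : Γ → Q such that σ is of n-Q type. -/
noncomputable section
open scoped Classical

def AbFG (G : Type*) [Group G] : Prop := ∃ S : Finset G, ∀ K : Subgroup G, (↑S ⊆ (K : Set G)) → commutator G ≤ K → K = ⊤

theorem AbFG.of_fg (G : Type*) [Group G] [h : Group.FG G] : AbFG G := by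
  obtain ⟨S, hS⟩ := h.out
  exact ⟨S, fun K hK _ => top_le_iff.mp (hS ▸ (Subgroup.closure_le K).mpr hK)⟩

theorem exists_surj_of_hom {A : Type*} [CommGroup A] [Group.FG A]
    (htf : ∀ a : A, a ≠ 1 → ¬ IsOfFinOrder a) [Nontrivial A] :
    ∃ φ : A →* Multiplicative ℤ, Function.Surjective φ := by
  have h1 : Module.Finite ℤ (Additive A) := by
    rw [Module.Finite.iff_addGroup_fg]
    infer_instance
  have h2 : Module.IsTorsionFree ℤ (Additive A) := by
    have : IsAddTorsionFree (Additive A) := by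
      rw [isAddTorsionFree_iff_not_isOfFinAddOrder]
      intro a ha h
      exact htf a.toMul ha (isOfFinAddOrder_ofMul_iff.mp h)
    infer_instance
  have h3 : Module.Free ℤ (Additive A) := inferInstance
  let b := Module.Free.chooseBasis ℤ (Additive A)
  have : Nonempty (Module.Free.ChooseBasisIndex ℤ (Additive A)) := b.index_nonempty
  obtain ⟨i⟩ := this
  refine ⟨AddMonoidHom.toMultiplicativeRight (b.coord i).toAddMonoidHom, ?_⟩
  intro z
  refine ⟨(z.toAdd • b i).toMul, ?_⟩
  simp

theorem exists_surj_aux {G A : Type*} [Group G] [CommGroup A]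
    (htf : ∀ a : A, a ≠ 1 → ¬ IsOfFinOrder a) (hab : AbFG G) (ψ : G →* A) (hψ : ψ ≠ 1) :
    ∃ φ : G →* Multiplicative ℤ, Function.Surjective φ := by
  obtain ⟨S, hS⟩ := hab
  have hfg : Group.FG ψ.range := by
    rw [Group.fg_iff_subgroup_fg]
    refine ⟨S.image ψ, ?_⟩
    apply le_antisymm
    · rw [Subgroup.closure_le]
      intro y hy
      obtain ⟨s, _, rfl⟩ := Finset.mem_image.mp (Finset.mem_coe.mp hy)
      exact ⟨s, rfl⟩
    · have := hS ((Subgroup.closure (↑(S.image ψ) : Set _)).comap ψ) ?_ ?_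
      · rintro _ ⟨g, rfl⟩
        have hg : g ∈ (⊤ : Subgroup G) := trivial
        rw [← this] at hg
        exact hg
      · intro s hs
        exact Subgroup.subset_closure (Finset.mem_coe.mpr (Finset.mem_image_of_mem _ hs))
      · refine le_trans (Abelianization.commutator_subset_ker ψ) ?_
        intro g hg
        rw [Subgroup.mem_comap, MonoidHom.mem_ker.mp hg]
        exact one_mem _
  have : Nontrivial ψ.range := by
    rw [Subgroup.nontrivial_iff_ne_bot]
    intro h
    exact hψ (MonoidHom.range_eq_bot_iff.mp h)
  obtain ⟨φ, hφ⟩ := exists_surj_of_hom (A := ψ.range) (by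
    intro a ha hfin
    apply htf a.1 (fun h => ha (Subtype.ext h))
    exact ψ.range.subtype.isOfFinOrder hfin)
  exact ⟨φ.comp ψ.rangeRestrict, hφ.comp ψ.rangeRestrict_surjective⟩

theorem exists_surj (G : Type*) [Group G] [Group.IsNilpotent G] [Nontrivial G]
    (htf : ∀ g : G, g ≠ 1 → ¬ IsOfFinOrder g) (hab : AbFG G) :
    ∃ φ : G →* Multiplicative ℤ, Function.Surjective φ := by
  have key : ∃ ψ : G →* Subgroup.center G, ψ ≠ 1 := by
    by_cases hc : Subgroup.center G = ⊤
    · refine ⟨⟨⟨fun g => ⟨g, by rw [hc]; trivial⟩, rfl⟩, fun _ _ => rfl⟩, ?_⟩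
      intro h
      obtain ⟨g, hg⟩ := exists_ne (1 : G)
      exact hg (congrArg Subtype.val (DFunLike.congr_fun h g))
    · have h12 : ¬ Subgroup.upperCentralSeries G 2 ≤ Subgroup.center G := by
        intro hle
        apply hc
        rw [← Subgroup.upperCentralSeries_one] at hle ⊢
        have := le_antisymm (Subgroup.upperCentralSeries_mono G (show 1 ≤ 2 by norm_num)) hle
        exact Subgroup.upperCentralSeries.eq_top (by norm_num) this
      obtain ⟨x, hx, hx'⟩ := SetLike.not_le_iff_exists.mp h12
      have hx2 : ∀ y, x * y * x⁻¹ * y⁻¹ ∈ Subgroup.center G := by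
        intro y
        have := (Subgroup.mem_upperCentralSeries_succ_iff (n := 1)).mp hx y
        rwa [Subgroup.upperCentralSeries_one] at this
      refine ⟨⟨⟨fun g => ⟨x * g * x⁻¹ * g⁻¹, hx2 g⟩, by simp⟩, ?_⟩, ?_⟩
      · intro g h
        ext
        have := Subgroup.mem_center_iff.mp (hx2 h) g
        simp only [Subgroup.coe_mul]
        calc x * (g * h) * x⁻¹ * (g * h)⁻¹ = x * g * x⁻¹ * (x * h * x⁻¹ * h⁻¹) * g⁻¹ := by group
          _ = x * g * x⁻¹ * (g⁻¹ * (g * (x * h * x⁻¹ * h⁻¹))) * g⁻¹ := by group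
          _ = _ := by rw [this]; group
      · intro h
        apply hx'
        rw [Subgroup.mem_center_iff]
        intro g
        have := congrArg Subtype.val (DFunLike.congr_fun h g)
        simp at this
        rw [mul_inv_eq_one, mul_inv_eq_iff_eq_mul] at this
        exact this.symm
  obtain ⟨ψ, hψ⟩ := key
  let _ : CommGroup (Subgroup.center G) :=
    { (inferInstance : Group (Subgroup.center G)) with
      mul_comm := fun a b => Subtype.ext (Subgroup.mem_center_iff.mp b.2 a.1) }
  refine exists_surj_aux (A := Subgroup.center G) ?_ hab ψ hψ
  intro a ha hfin
  apply htf a.1 (fun h => ha (Subtype.ext h))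
  exact (Subgroup.center G).subtype.isOfFinOrder hfin

section setup
open scoped commutatorElement
variable {Γ : Type*} [Group Γ] (π : Γ →* Multiplicative ℤ) (t : Γ) (ht : π t = Multiplicative.ofAdd 1)

abbrev pz (g : Γ) : ℤ := (π g).toAdd

theorem pi_zpow (ht : π t = Multiplicative.ofAdd 1) (k : ℤ) :
    π (t ^ k) = Multiplicative.ofAdd k := by
  rw [map_zpow, ht, ← ofAdd_zsmul]; simp

def nn (ht : π t = Multiplicative.ofAdd 1) (g : Γ) : π.ker :=
  ⟨g * t ^ (-(pz π g)), by rw [MonoidHom.mem_ker, map_mul, pi_zpow π t ht]; simp [pz]⟩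

abbrev al : MulAut π.ker := MulAut.conjNormal t

theorem al_zpow (k : ℤ) (m : π.ker) : (((al π t) ^ k) m : Γ) = t ^ k * m * (t ^ k)⁻¹ := by
  unfold al
  rw [← map_zpow, MulAut.conjNormal_apply]

theorem nn_mul (g h : Γ) :
    nn π t ht (g * h) = nn π t ht g * ((al π t) ^ (pz π g)) (nn π t ht h) := by
  ext
  rw [Subgroup.coe_mul, al_zpow]
  simp only [nn, pz, map_mul, toAdd_mul, neg_add_rev, zpow_add, zpow_neg]
  group

theorem nn_ker (m : π.ker) : nn π t ht m = m := by
  ext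
  have : π m = 1 := m.2
  simp [nn, pz, this]

theorem pz_ker (m : π.ker) : pz π m = 0 := by
  have : π m = 1 := m.2
  simp [pz, this]

theorem nn_t : nn π t ht t = 1 := by
  ext
  simp [nn, pz, ht]

theorem pz_t (ht : π t = Multiplicative.ofAdd 1) : pz π t = 1 := by
  simp [pz, ht]

theorem nn_one : nn π t ht 1 = 1 := by
  ext
  simp [nn, pz]

def ad (m : π.ker) : π.ker := al π t m * m⁻¹

theorem ad_iter_mem (m : π.ker) (j : ℕ) :
    (((ad π t)^[j] m : π.ker) : Γ) ∈ (⊤ : Subgroup Γ).lowerCentralSeries j := by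
  induction j with
  | zero => simp
  | succ j ih =>
    rw [Function.iterate_succ_apply', Subgroup.lowerCentralSeries_succ]
    have : ((ad π t ((ad π t)^[j] m) : π.ker) : Γ) = ⁅t, (((ad π t)^[j] m : π.ker) : Γ)⁆ := by
      simp [ad, commutatorElement_def]
    rw [this, ← commutatorElement_inv]
    exact inv_mem (Subgroup.commutator_mem_commutator ih trivial)

theorem ad_nilp [Group.IsNilpotent Γ] : ∃ c : ℕ, ∀ j, c ≤ j → ∀ m : π.ker, (ad π t)^[j] m = 1 := by
  obtain ⟨c, hc⟩ := Subgroup.nilpotent_iff_lowerCentralSeries.mp ‹Group.IsNilpotent Γ›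
  refine ⟨c, fun j hj m => ?_⟩
  ext
  have := Subgroup.lowerCentralSeries_antitone _ hj (ad_iter_mem π t m j)
  rw [hc] at this
  simpa using this

include ht in
theorem abfg_ker [Group.IsNilpotent Γ] [hfg : Group.FG Γ] : AbFG π.ker := by
  obtain ⟨X, hX⟩ := hfg.out
  obtain ⟨c, hc⟩ := ad_nilp π t
  refine ⟨(X ×ˢ Finset.range c).image (fun p => (ad π t)^[p.2] (nn π t ht p.1)), ?_⟩
  intro P hS hcomm
  have hS' : ∀ x ∈ X, ∀ j, (ad π t)^[j] (nn π t ht x) ∈ P := by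
    intro x hx j
    by_cases hj : j < c
    · exact hS (Finset.mem_coe.mpr (Finset.mem_image.mpr ⟨(x, j), by simp [hx, hj], rfl⟩))
    · rw [hc j (not_lt.mp hj)]; exact one_mem _
  -- generating subgroup
  set S : Set π.ker := {y | ∃ x ∈ X, ∃ j, y = (ad π t)^[j] (nn π t ht x)} with hSdef
  set P' : Subgroup π.ker := Subgroup.closure S ⊔ commutator π.ker with hP'
  have hle : P' ≤ P := by
    refine sup_le ((Subgroup.closure_le _).mpr ?_) hcomm
    rintro _ ⟨x, hx, j, rfl⟩
    exact hS' x hx j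
  have hSP : ∀ x ∈ X, ∀ j, (ad π t)^[j] (nn π t ht x) ∈ P' := fun x hx j =>
    (le_sup_left : _ ≤ P') (Subgroup.subset_closure ⟨x, hx, j, rfl⟩)
  have hmap : ∀ a : MulAut π.ker, (∀ x ∈ X, ∀ j, a ((ad π t)^[j] (nn π t ht x)) ∈ P') →
      ∀ p ∈ P', a p ∈ P' := by
    intro a ha
    have : P' ≤ P'.comap a.toMonoidHom := by
      refine sup_le ((Subgroup.closure_le _).mpr ?_) ?_
      · rintro _ ⟨x, hx, j, rfl⟩
        exact ha x hx j
      · have h1 : commutator π.ker = (commutator π.ker).comap a.toMonoidHom :=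
          ((inferInstance : (commutator π.ker).Characteristic).fixed a).symm
        exact h1.le.trans (Subgroup.comap_mono le_sup_right)
    exact fun p hp => this hp
  have hstep : ∀ m, al π t m = ad π t m * m := by intro m; simp [ad]
  have hal : ∀ p ∈ P', al π t p ∈ P' := by
    apply hmap
    intro x hx j
    rw [hstep, ← Function.iterate_succ_apply' (ad π t)]
    exact mul_mem (hSP x hx _) (hSP x hx _)
  have hali : ∀ p ∈ P', (al π t)⁻¹ p ∈ P' := by
    apply hmap
    intro x hx
    have : ∀ i j, c ≤ i + j → (al π t)⁻¹ ((ad π t)^[j] (nn π t ht x)) ∈ P' := by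
      intro i
      induction i with
      | zero =>
        intro j hj
        rw [hc j (by omega), map_one]; exact one_mem _
      | succ i ih =>
        intro j hj
        have h1 := ih (j+1) (by omega)
        have h2 := hstep ((ad π t)^[j] (nn π t ht x))
        rw [← Function.iterate_succ_apply' (ad π t)] at h2
        have h3 := congrArg (fun z => (al π t)⁻¹ z) h2
        simp only [map_mul, MulAut.inv_apply_self] at h3
        have h4 := eq_inv_mul_iff_mul_eq.mpr h3.symm
        rw [h4]
        exact mul_mem (inv_mem h1) (hSP x hx _)
    exact fun j => this c j (by omega)
  have hpow : ∀ k : ℤ, ∀ p ∈ P', ((al π t) ^ k) p ∈ P' := by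
    intro k
    induction k using Int.induction_on with
    | zero => intro p hp; simpa using hp
    | succ i ih =>
      intro p hp
      rw [add_comm, zpow_add, zpow_one, MulAut.mul_apply]
      exact hal _ (ih p hp)
    | pred i ih =>
      intro p hp
      rw [sub_eq_add_neg, add_comm, zpow_add, zpow_neg_one, MulAut.mul_apply]
      exact hali _ (ih p hp)
  have hall : ∀ g : Γ, nn π t ht g ∈ P' := by
    intro g
    have hg : g ∈ Subgroup.closure (X : Set Γ) := by rw [hX]; trivial
    induction hg using Subgroup.closure_induction with
    | mem x hx => exact hSP x hx 0
    | one => rw [nn_one]; exact one_mem _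
    | mul x y _ _ hx hy => rw [nn_mul]; exact mul_mem hx (hpow _ _ hy)
    | inv x _ hx =>
      have := nn_mul π t ht x⁻¹ x
      rw [inv_mul_cancel, nn_one] at this
      rw [eq_inv_of_mul_eq_one_left this.symm]
      exact inv_mem (hpow _ _ hx)
  rw [eq_top_iff]
  intro m _
  rw [← nn_ker π t ht m]
  exact hle (hall _)


def ac {N R : Type*} [Group N] [AddCommGroup R] (a : MulAut N) (μ : Additive N →+ R) :
    Additive N →+ R := μ.comp (MonoidHom.toAdditive a.toMonoidHom)

theorem ac_apply {N R : Type*} [Group N] [AddCommGroup R] (a : MulAut N) (μ : Additive N →+ R)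
    (m : N) : ac a μ (Additive.ofMul m) = μ (Additive.ofMul (a m)) := rfl

theorem hom_ext' {N R : Type*} [Group N] [AddCommGroup R] {μ ν : Additive N →+ R}
    (h : ∀ m : N, μ (Additive.ofMul m) = ν (Additive.ofMul m)) : μ = ν :=
  AddMonoidHom.ext fun x => h x.toMul

/-- the affine permutation -/
def TT (lam : Additive π.ker →+ ℤ) : Equiv.Perm (Additive π.ker →+ ℤ) where
  toFun μ := ac (al π t) μ + lam
  invFun μ := ac (al π t)⁻¹ (μ - lam)
  left_inv μ := by
    apply hom_ext'
    intro m
    simp only [ac_apply, AddMonoidHom.sub_apply, AddMonoidHom.add_apply, MulAut.apply_inv_self]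
    simp
  right_inv μ := by
    apply hom_ext'
    intro m
    simp only [ac_apply, AddMonoidHom.sub_apply, AddMonoidHom.add_apply, MulAut.inv_apply_self]
    simp

def be (lam : Additive π.ker →+ ℤ) (k : ℤ) : Additive π.ker →+ ℤ := ((TT π t lam) ^ k) 0

theorem TT_zpow (lam μ : Additive π.ker →+ ℤ) (k : ℤ) :
    ∀ m : π.ker, ((TT π t lam) ^ k) μ (Additive.ofMul m) =
      μ (Additive.ofMul (((al π t) ^ k) m)) + be π t lam k (Additive.ofMul m) := by
  unfold be
  induction k using Int.induction_on with
  | zero => intro m; simp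
  | succ i ih =>
    intro m
    have e1 : (TT π t lam) ^ ((i : ℤ) + 1) = TT π t lam * (TT π t lam) ^ (i : ℤ) := by
      rw [add_comm, zpow_add, zpow_one]
    have e2 : ∀ ν, TT π t lam ν (Additive.ofMul m) =
      ν (Additive.ofMul (al π t m)) + lam (Additive.ofMul m) := fun ν => rfl
    rw [e1, Equiv.Perm.mul_apply, Equiv.Perm.mul_apply, e2, e2, ih, zpow_add, zpow_one,
      MulAut.mul_apply]
    ring
  | pred i ih =>
    intro m
    have e1 : (TT π t lam) ^ (-(i : ℤ) - 1) = (TT π t lam)⁻¹ * (TT π t lam) ^ (-(i : ℤ)) := by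
      rw [sub_eq_add_neg, add_comm, zpow_add, zpow_neg_one]
    have e2 : ∀ ν, (TT π t lam)⁻¹ ν (Additive.ofMul m) =
      ν (Additive.ofMul ((al π t)⁻¹ m)) - lam (Additive.ofMul ((al π t)⁻¹ m)) := fun ν => rfl
    rw [e1, Equiv.Perm.mul_apply, Equiv.Perm.mul_apply, e2, e2, ih, sub_eq_add_neg (-(i:ℤ)) 1,
      zpow_add, zpow_neg_one, MulAut.mul_apply]
    ring

theorem be_add (lam : Additive π.ker →+ ℤ) (k l : ℤ) (m : π.ker) :
    be π t lam (k + l) (Additive.ofMul m) =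
      be π t lam k (Additive.ofMul (((al π t) ^ l) m)) + be π t lam l (Additive.ofMul m) := by
  rw [← TT_zpow, be, be, add_comm, zpow_add, Equiv.Perm.mul_apply]

theorem be_zero (lam : Additive π.ker →+ ℤ) : be π t lam 0 = 0 := by simp [be]

theorem be_one (lam : Additive π.ker →+ ℤ) : be π t lam 1 = lam := by
  apply hom_ext'
  intro m
  simp [be, TT, ac_apply]

def sig (lam : Additive π.ker →+ ℤ) (g h : Γ) : ℤ :=
  be π t lam (pz π g) (Additive.ofMul (nn π t ht h))

theorem pz_mul (g h : Γ) : pz π (g * h) = pz π g + pz π h := by simp [pz]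

theorem sig_cocycle (lam : Additive π.ker →+ ℤ) (g₁ g₂ g₃ : Γ) :
    sig π t ht lam g₂ g₃ - sig π t ht lam (g₁ * g₂) g₃ + sig π t ht lam g₁ (g₂ * g₃)
      - sig π t ht lam g₁ g₂ = 0 := by
  unfold sig
  rw [pz_mul, be_add, nn_mul, ofMul_mul, map_add]
  ring

/-- choice of `lam` -/
theorem exists_lam [Group.IsNilpotent Γ] (l0 : Additive π.ker →+ ℤ) (h0 : l0 ≠ 0) :
    ∃ lam : Additive π.ker →+ ℤ, ∀ k : ℤ, k ≠ 0 → ∀ μ : Additive π.ker →+ ℤ,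
      k • lam ≠ ac (al π t) μ - μ := by
  by_contra! hcon
  obtain ⟨c, hc⟩ := ad_nilp π t
  have : ∀ j : ℕ, ∃ K : ℤ, K ≠ 0 ∧ ∃ μ : Additive π.ker →+ ℤ, ∀ m : π.ker,
      K * l0 (Additive.ofMul m) = μ (Additive.ofMul ((ad π t)^[j] m)) := by
    intro j
    induction j with
    | zero => exact ⟨1, one_ne_zero, l0, fun m => by simp⟩
    | succ j ih =>
      obtain ⟨K, hK, μ, hμ⟩ := ih
      obtain ⟨k, hk, ν, hν⟩ := hcon μ
      refine ⟨k * K, mul_ne_zero hk hK, ν, fun m => ?_⟩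
      rw [mul_assoc, hμ, Function.iterate_succ_apply']
      have := DFunLike.congr_fun hν (Additive.ofMul ((ad π t)^[j] m))
      rw [AddMonoidHom.sub_apply, ac_apply, AddMonoidHom.smul_apply, smul_eq_mul] at this
      rw [this, ad, ofMul_mul, map_add, ofMul_inv, map_neg, sub_eq_add_neg]
  obtain ⟨K, hK, μ, hμ⟩ := this c
  apply h0
  apply hom_ext'
  intro m
  have := hμ m
  rw [hc c le_rfl, ofMul_one, map_zero] at this
  simpa [hK] using this

theorem finite_hom_s3 {G : Type*} [Group G] (hab : AbFG G) (n : ℕ) [NeZero n] :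
    Finite (Additive G →+ ZMod n) := by
  obtain ⟨S, hS⟩ := hab
  refine Finite.of_injective
    (fun (μ : Additive G →+ ZMod n) => fun s : S => μ (Additive.ofMul s.1)) ?_
  intro μ ν h
  have := hS ((MonoidHom.eqLocus (AddMonoidHom.toMultiplicativeRight μ)
    (AddMonoidHom.toMultiplicativeRight ν))) ?_ ?_
  · apply hom_ext'
    intro m
    have hm : m ∈ (⊤ : Subgroup G) := trivial
    rw [← this] at hm
    exact hm
  · intro s hs
    exact congrFun h ⟨s, hs⟩
  · intro g hg
    have h1 := Abelianization.commutator_subset_ker (AddMonoidHom.toMultiplicativeRight μ) hg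
    have h2 := Abelianization.commutator_subset_ker (AddMonoidHom.toMultiplicativeRight ν) hg
    exact (MonoidHom.mem_ker.mp h1).trans (MonoidHom.mem_ker.mp h2).symm

theorem clear_denom {G : Type*} [Group G] (hab : AbFG G) (f : Additive G →+ ℚ) :
    ∃ k : ℤ, k ≠ 0 ∧ ∃ μ : Additive G →+ ℤ, ∀ m, (μ m : ℚ) = k * f m := by
  obtain ⟨S, hS⟩ := hab
  obtain ⟨b, hb⟩ := IsLocalization.exist_integer_multiples (nonZeroDivisors ℤ) S
    (fun s => f (Additive.ofMul s))
  let F : Additive G →+ ℚ := (b : ℤ) • f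
  let ic : ℤ →+ ℚ := Int.castAddHom ℚ
  have := hS (Subgroup.comap (AddMonoidHom.toMultiplicativeRight F)
    (AddSubgroup.toSubgroup ic.range)) ?_ ?_
  · have hF : ∀ m : Additive G, ∃ z : ℤ, (z : ℚ) = F m := by
      intro m
      have hm : m.toMul ∈ (⊤ : Subgroup G) := trivial
      rw [← this] at hm
      exact hm
    choose z hz using hF
    refine ⟨b, nonZeroDivisors.coe_ne_zero b, AddMonoidHom.mk' z ?_, ?_⟩
    · intro x y
      have : ((z (x + y) : ℤ) : ℚ) = ((z x + z y : ℤ) : ℚ) := by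
        push_cast
        rw [hz, hz, hz, map_add]
      exact_mod_cast this
    · intro m
      rw [AddMonoidHom.mk'_apply, hz]
      simp [F]
  · intro s hs
    obtain ⟨z, hz⟩ := hb s hs
    refine ⟨z, ?_⟩
    exact hz
  · intro g hg
    have h1 := Abelianization.commutator_subset_ker (AddMonoidHom.toMultiplicativeRight F) hg
    rw [Subgroup.mem_comap, MonoidHom.mem_ker.mp h1]
    exact one_mem _

theorem no_potential (hab : AbFG π.ker) (lam : Additive π.ker →+ ℤ)
    (hlam : ∀ k : ℤ, k ≠ 0 → ∀ μ : Additive π.ker →+ ℤ, k • lam ≠ ac (al π t) μ - μ)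
    (f : Γ → ℚ) (hf : ∀ g h, (sig π t ht lam g h : ℚ) = f g + f h - f (g * h)) : False := by
  have h0 : ∀ m : π.ker, ∀ h, f (m * h) = f m + f h := by
    intro m h
    have := hf m h
    rw [sig, pz_ker, be_zero] at this
    simp at this
    linarith
  let F : Additive π.ker →+ ℚ := AddMonoidHom.mk' (fun x => f (x.toMul : π.ker)) (by
    intro x y
    exact h0 _ _)
  have h1 : ∀ m : π.ker, (lam (Additive.ofMul m) : ℚ) = f m - f (al π t m) := by
    intro m
    have := hf t m
    rw [sig, pz_t π t ht, be_one, nn_ker] at this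
    have h2 : t * (m : Γ) = (al π t m : π.ker) * t := by simp
    rw [h2, h0] at this
    linarith
  obtain ⟨k, hk, μ, hμ⟩ := clear_denom hab F
  apply hlam k hk (-μ)
  apply hom_ext'
  intro m
  have e : ((k * lam (Additive.ofMul m) : ℤ) : ℚ) =
      ((μ (Additive.ofMul m) - μ (Additive.ofMul (al π t m)) : ℤ) : ℚ) := by
    push_cast
    rw [h1, hμ, hμ]
    simp only [F, AddMonoidHom.mk'_apply, toMul_ofMul]
    ring
  have e' := Int.cast_injective e
  rw [AddMonoidHom.sub_apply, ac_apply, AddMonoidHom.smul_apply, smul_eq_mul, e',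
    AddMonoidHom.neg_apply, AddMonoidHom.neg_apply]
  ring

/-- finitely many translates -/
theorem exists_period {B I : Type*} [Finite I] (F : Γ → B) (Φ : I → Γ → B)
    (h : ∀ a, ∃ i, ∀ g, F (a * g) = Φ i g) :
    ∃ K : Subgroup Γ, K.Normal ∧ K.FiniteIndex ∧ ∀ k ∈ K, ∀ g, F (k * g) = F g := by
  let _ : MulAction Γ (Γ → B) := arrowAction
  have hfin : (MulAction.orbit Γ F).Finite := by
    refine (Set.finite_range Φ).subset ?_
    rintro _ ⟨a, rfl⟩
    obtain ⟨i, hi⟩ := h a⁻¹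
    exact ⟨i, funext fun g => (hi g).symm⟩
  have : Finite (MulAction.orbit Γ F) := hfin
  have h1 : (MulAction.stabilizer Γ F).FiniteIndex := by
    have : Finite (Γ ⧸ MulAction.stabilizer Γ F) :=
      Finite.of_equiv _ (MulAction.orbitEquivQuotientStabilizer Γ F)
    exact Subgroup.finiteIndex_of_finite_quotient
  refine ⟨(MulAction.stabilizer Γ F).normalCore, inferInstance, inferInstance, ?_⟩
  intro k hk g
  have := Subgroup.normalCore_le _ (inv_mem hk)
  have h2 := congrFun (MulAction.mem_stabilizer_iff.mp this) g
  change F (k⁻¹⁻¹ * g) = F g at h2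
  rwa [inv_inv] at h2

theorem sig_finite (hab : AbFG π.ker) (lam : Additive π.ker →+ ℤ) (n : ℕ) [NeZero n] :
    ∃ K : Subgroup Γ, K.Normal ∧ K.FiniteIndex ∧ ∀ k ∈ K, ∀ g h,
      (sig π t ht lam (k * g) h : ZMod n) = sig π t ht lam g h ∧
      (sig π t ht lam g (k * h) : ZMod n) = sig π t ht lam g h := by
  have := finite_hom_s3 hab n
  let ic : ℤ →+ ZMod n := Int.castAddHom (ZMod n)
  let X := Additive π.ker →+ ZMod n
  let bb : ℤ → X := fun k => ic.comp (be π t lam k)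
  obtain ⟨K₁, hN1, hF1, hK1⟩ := exists_period (Γ := Γ) (B := X) (I := X) (fun g => bb (pz π g))
    (fun x g => ac ((al π t) ^ (pz π g)) x + bb (pz π g)) (by
      intro a
      refine ⟨bb (pz π a), fun g => ?_⟩
      apply hom_ext'
      intro m
      simp only [bb, AddMonoidHom.comp_apply]
      rw [pz_mul, be_add, map_add]
      rfl)
  obtain ⟨K₂, hN2, hF2, hK2⟩ := exists_period (Γ := Γ) (B := X → ZMod n)
    (I := (X → ZMod n) × (X → X)) (fun h μ => μ (Additive.ofMul (nn π t ht h)))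
    (fun i h μ => i.1 μ + i.2 μ (Additive.ofMul (nn π t ht h))) (by
      intro a
      refine ⟨(fun μ => μ (Additive.ofMul (nn π t ht a)), ac ((al π t) ^ (pz π a))), fun g => ?_⟩
      funext μ
      simp only
      rw [nn_mul, ofMul_mul, map_add]
      rfl)
  refine ⟨K₁ ⊓ K₂, inferInstance, inferInstance, ?_⟩
  intro k hk g h
  constructor
  · exact DFunLike.congr_fun (hK1 k hk.1 g) (Additive.ofMul (nn π t ht h))
  · exact congrFun (hK2 k hk.2 h) (bb (pz π g))

end setup


section pairing
variable {Γ : Type*} [Group Γ]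

def BQ : ((Γ × Γ) →₀ ℚ) →ₗ[ℚ] (Γ →₀ ℚ) := Finsupp.linearCombination ℚ
  (fun p : Γ × Γ => Finsupp.single p.2 (1 : ℚ) - Finsupp.single (p.1 * p.2) 1
    + Finsupp.single p.1 1)

theorem BQ_cast (c : (Γ × Γ) →₀ ℤ) (g : Γ) :
    BQ (c.mapRange (Int.cast : ℤ → ℚ) Int.cast_zero) g = (chainBoundary c g : ℚ) := by
  rw [BQ, Finsupp.linearCombination_apply, Finsupp.sum_mapRange_index (by simp), chainBoundary,
    Finsupp.sum, Finsupp.sum, Finsupp.finsetSum_apply]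
  push_cast
  refine Finset.sum_congr rfl fun p _ => ?_
  simp [Finsupp.single_apply]

theorem exists_potential (σ : Γ → Γ → ℤ) (h : ∀ c, IsTwoCycle c → pairInt σ c = 0) :
    ∃ f : Γ → ℚ, ∀ g h, (σ g h : ℚ) = f g + f h - f (g * h) := by
  let s : ((Γ × Γ) →₀ ℚ) →ₗ[ℚ] ℚ := Finsupp.linearCombination ℚ
    (fun p : Γ × Γ => (σ p.1 p.2 : ℚ))
  have hs : ∀ c : (Γ × Γ) →₀ ℤ, s (c.mapRange (Int.cast : ℤ → ℚ) Int.cast_zero) =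
      (pairInt σ c : ℚ) := by
    intro c
    simp only [s]
    rw [Finsupp.linearCombination_apply, Finsupp.sum_mapRange_index (by simp), pairInt,
      Finsupp.sum, Finsupp.sum]
    push_cast
    refine Finset.sum_congr rfl fun p _ => ?_
    simp
  have hker : LinearMap.ker (BQ (Γ := Γ)) ≤ LinearMap.ker s := by
    intro d hd
    rw [LinearMap.mem_ker] at hd ⊢
    obtain ⟨b, hb⟩ := IsLocalization.exist_integer_multiples (nonZeroDivisors ℤ) d.support d
    have hb0 : ((b : ℤ) : ℚ) ≠ 0 := by exact_mod_cast nonZeroDivisors.coe_ne_zero b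
    let c : (Γ × Γ) →₀ ℤ := d.mapRange (fun q => ⌊((b : ℤ) : ℚ) * q⌋) (by simp)
    have hc : c.mapRange (Int.cast : ℤ → ℚ) Int.cast_zero = ((b : ℤ) : ℚ) • d := by
      ext p
      simp only [c, Finsupp.mapRange_apply, Finsupp.smul_apply, smul_eq_mul]
      by_cases hp : p ∈ d.support
      · obtain ⟨z, hz⟩ := hb p hp
        have hz' : (z : ℚ) = ((b : ℤ) : ℚ) * d p := by
          rw [← zsmul_eq_mul]; exact hz
        rw [← hz', Int.floor_intCast]
      · rw [Finsupp.notMem_support_iff.mp hp]; simp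
    have hcyc : IsTwoCycle c := by
      funext g
      have := BQ_cast c g
      rw [hc, map_smul, hd] at this
      simp only [smul_zero, Finsupp.coe_zero, Pi.zero_apply] at this
      exact_mod_cast this.symm
    have := hs c
    rw [h c hcyc, hc, map_smul, smul_eq_mul, Int.cast_zero] at this
    exact (mul_eq_zero.mp this).resolve_left hb0
  have : s ∈ LinearMap.range (BQ (Γ := Γ)).dualMap := by
    rw [LinearMap.range_dualMap_eq_dualAnnihilator_ker, Submodule.mem_dualAnnihilator]
    exact fun w hw => hker hw
  obtain ⟨F, hF⟩ := this
  refine ⟨fun g => F (Finsupp.single g 1), fun g k => ?_⟩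
  have := DFunLike.congr_fun hF (Finsupp.single (g, k) 1)
  simp only [LinearMap.dualMap_apply, BQ, s, Finsupp.linearCombination_single, one_smul, map_add,
    map_sub] at this
  rw [← this]
  ring

end pairing

/-- A finitely generated torsion-free nilpotent group which is neither trivial
nor infinite cyclic carries a ℤ-valued 2-cocycle `σ` of finite type pairing nontrivially
with some 2-cycle `c`. -/
theorem stmt3 {Γ : Type*} [Group Γ] [Group.FG Γ] [Group.IsNilpotent Γ]
    (htf : ∀ g : Γ, g ≠ 1 → ¬ IsOfFinOrder g)
    (hnontriv : Nontrivial Γ) (hnotZ : IsEmpty (Γ ≃* Multiplicative ℤ)) :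
    ∃ (σ : Γ → Γ → ℤ) (c : (Γ × Γ) →₀ ℤ),
      IsTwoCocycle σ ∧ IsTwoCycle c ∧ pairInt σ c ≠ 0 ∧
      ∀ N : ℕ, ∃ n : ℕ, N < n ∧
        ∃ (Q : Type) (_ : Group Q) (_ : Fintype Q) (q : Γ →* Q),
          Function.Surjective q ∧
          ∃ σ' : Q → Q → ZMod n, ∀ g h : Γ, ((σ g h : ℤ) : ZMod n) = σ' (q g) (q h) := by
  obtain ⟨π, hπ⟩ := exists_surj Γ htf (AbFG.of_fg Γ)
  obtain ⟨t, ht⟩ := hπ (Multiplicative.ofAdd 1)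
  have hab : AbFG π.ker := abfg_ker π t ht
  have hnt : Nontrivial π.ker := by
    rw [Subgroup.nontrivial_iff_ne_bot]
    intro h
    exact hnotZ.false (MulEquiv.ofBijective π ⟨(MonoidHom.ker_eq_bot_iff π).mp h, hπ⟩)
  obtain ⟨φ, hφ⟩ := exists_surj π.ker (by
    intro g hg hfin
    exact htf g.1 (fun h => hg (Subtype.ext h)) (π.ker.subtype.isOfFinOrder hfin)) hab
  obtain ⟨lam, hlam⟩ := exists_lam π t (AddMonoidHom.toMultiplicativeRight.symm φ) (by
    intro h
    obtain ⟨m, hm⟩ := hφ (Multiplicative.ofAdd 1)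
    have := DFunLike.congr_fun h (Additive.ofMul m)
    simp [hm] at this)
  have hc : ∃ c, IsTwoCycle c ∧ pairInt (sig π t ht lam) c ≠ 0 := by
    by_contra! hcon
    obtain ⟨f, hf⟩ := exists_potential (sig π t ht lam) hcon
    exact no_potential π t ht hab lam hlam f hf
  obtain ⟨c, hc1, hc2⟩ := hc
  refine ⟨sig π t ht lam, c, sig_cocycle π t ht lam, hc1, hc2, ?_⟩
  intro N
  refine ⟨N + 1, Nat.lt_succ_self N, ?_⟩
  obtain ⟨K, hKn, hKf, hK⟩ := sig_finite π t ht hab lam (N + 1)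
  obtain ⟨Q, hQ, hQf, ⟨e⟩⟩ := Finite.exists_type_univ_nonempty_mulEquiv.{_, 0} (Γ ⧸ K)
  let q : Γ →* Q := e.toMonoidHom.comp (QuotientGroup.mk' K)
  have hq : Function.Surjective q := e.surjective.comp (QuotientGroup.mk'_surjective K)
  have hqK : ∀ g h, q g = q h → ∃ k ∈ K, h = k * g := by
    intro g h hgh
    have h1 : (QuotientGroup.mk' K) g = (QuotientGroup.mk' K) h := e.injective hgh
    refine ⟨h * g⁻¹, ?_, by group⟩
    rw [← QuotientGroup.ker_mk' K, MonoidHom.mem_ker, map_mul, map_inv, h1, mul_inv_cancel]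
  refine ⟨Q, hQ, hQf, q, hq, fun a b => ((sig π t ht lam (Function.surjInv hq a)
    (Function.surjInv hq b) : ℤ) : ZMod (N + 1)), ?_⟩
  intro g h
  obtain ⟨k, hk, hk'⟩ := hqK g _ (Function.surjInv_eq hq (q g)).symm
  obtain ⟨l, hl, hl'⟩ := hqK h _ (Function.surjInv_eq hq (q h)).symm
  beta_reduce
  rw [hk', hl', (hK k hk _ _).1, (hK l hl _ _).2]
end
end
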